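/- Let (u_ε, m_ε, H̄_ε) ∈ C^∞(𝕋^d)×C^∞(𝕋^d)×ℝ, with m_ε > 0, solve the oscillating mean-field game system: (1/2)|P+∇u_ε(x)|² + V(x, x/ε) = ln(m_ε(x)) + H̄_ε(P) and −div(m_ε(x)(P+∇u_ε(x))) = 0 in 𝕋^d, with ∫_{𝕋^d} u_ε dx = 0 and ∫_{𝕋^d} m_ε dx = 1, and let q ∈ [1,∞). Then there exist α ∈ (0,1), u_0 ∈ C^{0,α}(𝕋^d) ∩ W^{1,q}(𝕋^d) with ∫_{𝕋^d} u_0 dx = 0, u_1 ∈ L^q(𝕋^d; W^{1,q}_#(𝒴^d)/ℝ), m ∈ L^1(𝕋^d×𝒴^d) with ∫_{𝕋^d}∫_{𝒴^d} m dy dx = 1, and H̄(P) ∈ ℝ such that, along a subsequence: u_ε → u_0 in L^∞(𝕋^d); u_ε ⇀ u_0 weakly in W^{1,q}(𝕋^d); ∇u_ε weakly two-scale converges to ∇u_0 + ∇_y u_1 in [L^q(𝕋^d×𝒴^d)]^d; m_ε weakly two-scale converges to m in L^1(𝕋^d×𝒴^d); m_ε ⇀ m_0 := ∫_{𝒴^d}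 m(·,y)dy weakly in L^1(𝕋^d); and H̄_ε(P) → H̄(P) in ℝ. -/

import Mathlib

open MeasureTheory Filter Topology Function

noncomputable section

/-- The unit cell `𝒴^d = [0,1)^d`. -/
def cube (d : ℕ) : Set (Fin d → ℝ) := Set.univ.pi fun _ => Set.Ico (0 : ℝ) 1

/-- `ℤ^d`-periodicity of a function on `ℝ^d`; functions on the torus `𝕋^d`
(and `𝒴^d`-periodic functions) are identified with such functions. -/
def ZPer {d : ℕ} (f : (Fin d → ℝ) → ℝ) : Prop :=
  ∀ (x : Fin d → ℝ) (k : Fin d → ℤ), f (fun i => x i + (k i : ℝ)) = f x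

/-- The `i`-th partial derivative. -/
def pder {d : ℕ} (i : Fin d) (f : (Fin d → ℝ) → ℝ) (x : Fin d → ℝ) : ℝ :=
  fderiv ℝ f x (Pi.single i 1)

/-- `V : 𝕋^d × ℝ^d → ℝ` smooth, `𝒴^d`-periodic in the second variable
(and periodic in the first, i.e. defined on the torus). -/
def SmoothV {d : ℕ} (V : (Fin d → ℝ) → (Fin d → ℝ) → ℝ) : Prop :=
  ContDiff ℝ (⊤ : ℕ∞) (uncurry V) ∧ (∀ y, ZPer fun x => V x y) ∧ (∀ x, ZPer (V x))

/-- `sup_{(x,y) ∈ 𝕋^d × 𝒴^d} V (x,y)` (by periodicity, the sup over all of `ℝ^d × ℝ^d`). -/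
def supV {d : ℕ} (V : (Fin d → ℝ) → (Fin d → ℝ) → ℝ) : ℝ :=
  ⨆ q : (Fin d → ℝ) × (Fin d → ℝ), V q.1 q.2

/-- `inf_{(x,y) ∈ 𝕋^d × 𝒴^d} V (x,y)`. -/
def infV {d : ℕ} (V : (Fin d → ℝ) → (Fin d → ℝ) → ℝ) : ℝ :=
  ⨅ q : (Fin d → ℝ) × (Fin d → ℝ), V q.1 q.2

/-- `(u, m, H)` is a (smooth, positive, normalized) solution of the `ε`-oscillating
MFG system of Problem 1:
`|P+∇u|²/2 + V(x,x/ε) = ln m + H`, `-div(m (P+∇u)) = 0`, `∫ u = 0`, `∫ m = 1`. -/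
def SolvesMFG {d : ℕ} (P : Fin d → ℝ) (V : (Fin d → ℝ) → (Fin d → ℝ) → ℝ)
    (ε : ℝ) (u m : (Fin d → ℝ) → ℝ) (H : ℝ) : Prop :=
  ContDiff ℝ (⊤ : ℕ∞) u ∧ ZPer u ∧ ContDiff ℝ (⊤ : ℕ∞) m ∧ ZPer m ∧ (∀ x, 0 < m x) ∧
  (∀ x, (∑ i, (P i + pder i u x) ^ 2) / 2 + V x (ε⁻¹ • x) = Real.log (m x) + H) ∧
  (∀ x, (∑ i, pder i (fun z => m z * (P i + pder i u z)) x) = 0) ∧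
  (∫ x in cube d, u x) = 0 ∧ (∫ x in cube d, m x) = 1

/-- Admissible test functions for two-scale convergence: `ψ ∈ C^∞(𝕋^d; C^∞_#(𝒴^d))`. -/
def TestFn {d : ℕ} (ψ : (Fin d → ℝ) → (Fin d → ℝ) → ℝ) : Prop :=
  ContDiff ℝ (⊤ : ℕ∞) (uncurry ψ) ∧ (∀ y, ZPer fun x => ψ x y) ∧ (∀ x, ZPer (ψ x))

/-- Weak two-scale convergence of `(w_ε)` to `W` along the sequence of scales `ε`:
`∫_{𝕋^d} w_ε ψ(x, x/ε) dx → ∫_{𝕋^d}∫_{𝒴^d} W ψ dy dx` for every admissible `ψ`. -/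
def TwoScaleW {d : ℕ} (ε : ℕ → ℝ) (w : ℕ → (Fin d → ℝ) → ℝ)
    (W : (Fin d → ℝ) → (Fin d → ℝ) → ℝ) : Prop :=
  ∀ ψ : (Fin d → ℝ) → (Fin d → ℝ) → ℝ, TestFn ψ →
    Tendsto (fun n => ∫ x in cube d, w n x * ψ x ((ε n)⁻¹ • x)) atTop
      (𝓝 (∫ x in cube d, ∫ y in cube d, W x y * ψ x y))

/-- Strong two-scale convergence in `L^p`: weak two-scale convergence together with
convergence of the `L^p` norms. -/
def TwoScaleS {d : ℕ} (ε : ℕ → ℝ) (p : ℝ) (w : ℕ → (Fin d → ℝ) → ℝ)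
    (W : (Fin d → ℝ) → (Fin d → ℝ) → ℝ) : Prop :=
  TwoScaleW ε w W ∧
    Tendsto (fun n => (∫ x in cube d, |w n x| ^ p) ^ (1 / p)) atTop
      (𝓝 ((∫ x in cube d, ∫ y in cube d, |W x y| ^ p) ^ (1 / p)))

/-- Weak convergence in `L^q(𝕋^d)` (tested against bounded measurable functions). -/
def WeakConvCube {d : ℕ} (w : ℕ → (Fin d → ℝ) → ℝ) (W : (Fin d → ℝ) → ℝ) : Prop :=
  ∀ φ : (Fin d → ℝ) → ℝ, Measurable φ → (∃ M : ℝ, ∀ x, |φ x| ≤ M) →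
    Tendsto (fun n => ∫ x in cube d, w n x * φ x) atTop (𝓝 (∫ x in cube d, W x * φ x))

/-- `g` is the `i`-th weak partial derivative of `v` on the torus:
`∫ v ∂_iφ = -∫ g φ` for all smooth periodic `φ`. -/
def WeakPDer {d : ℕ} (i : Fin d) (v g : (Fin d → ℝ) → ℝ) : Prop :=
  ∀ φ : (Fin d → ℝ) → ℝ, ContDiff ℝ (⊤ : ℕ∞) φ → ZPer φ →
    (∫ x in cube d, v x * pder i φ x) = - ∫ x in cube d, g x * φ x

/-- `α`-Hölder continuity. -/
def HolderCont {d : ℕ} (α : ℝ) (f : (Fin d → ℝ) → ℝ) : Prop :=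
  ∃ C : ℝ, ∀ x y, |f x - f y| ≤ C * dist x y ^ α

/-
Testing the continuity equation with `u` shows that the flux `m (P + ∇u)` is orthogonal to `∇u`,
which bounds the entropy of `m` and hence `H`, uniformly in `ε`. The Hamilton–Jacobi equation bounds
the kinetic energy by `log m` up to a constant, so `∫ m = 1` makes `exp (c |∇u|)` integrable and
bounds `∇u` in every `L^r`; Morrey's inequality and the Arzelà–Ascoli theorem then give the uniform
limit, while the entropy bound makes `m` uniformly integrable. Two-scale limits are weak `L¹` limits
of the unfolded functions `w ∘ unfoldMap ε` on `cube d × cube d`, which exist by the Dunford–Pettis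
theorem. Finally `u₁` is the two-scale limit of `ε⁻¹ (u - cell averages of u)`; an integration by
parts identifies its weak `y`-gradient with the two-scale limit of `∇u` minus its `y`-mean.
-/

section Integral

variable {Ω Ω' : Type*} [MeasurableSpace Ω] [MeasurableSpace Ω'] {μ : Measure Ω} {μ' : Measure Ω'}

theorem integrable_of_abs_le [IsFiniteMeasure μ] {f : Ω → ℝ} (hf : Measurable f) {M : ℝ}
    (hM : ∀ x, |f x| ≤ M) : Integrable f μ :=
  .of_bound hf.aestronglyMeasurable M (Eventually.of_forall hM)

theorem integral_comp_measurePreserving {T : Ω → Ω'} (hT : MeasurePreserving T μ μ') {f : Ω' → ℝ}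
    (hf : Measurable f) : ∫ x, f (T x) ∂μ = ∫ y, f y ∂μ' := by
  rw [← hT.map_eq, integral_map hT.measurable.aemeasurable hf.aestronglyMeasurable]

theorem pow_integral_le_integral_pow [IsProbabilityMeasure μ] {f : Ω → ℝ} {p : ℕ}
    (hf₀ : ∀ x, 0 ≤ f x) (hf : Integrable f μ) (hfp : Integrable (fun x => f x ^ p) μ) :
    (∫ x, f x ∂μ) ^ p ≤ ∫ x, f x ^ p ∂μ :=
  (convexOn_pow p).map_integral_le (continuous_pow p).continuousOn isClosed_Ici
    (Eventually.of_forall hf₀) hf hfp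

theorem integrable_abs_rpow_of_memLp {f : Ω → ℝ} {q : ℝ} (hq : 0 < q)
    (hf : MemLp f (ENNReal.ofReal q) μ) : Integrable (fun x => |f x| ^ q) μ := by
  simpa only [ENNReal.toReal_ofReal hq.le, Real.norm_eq_abs] using
    hf.integrable_norm_rpow (ENNReal.ofReal_pos.mpr hq).ne' ENNReal.ofReal_ne_top

theorem tendsto_integral_mul_of_tendstoUniformly {v : Ω → ℝ} (hv : Integrable v μ)
    {f : ℕ → Ω → ℝ} (hf : ∀ n, Measurable (f n)) {g : Ω → ℝ} {M : ℝ} (hM : ∀ x, |g x| ≤ M)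
    (h : TendstoUniformly f g atTop) :
    Tendsto (fun n => ∫ x, v x * f n x ∂μ) atTop (𝓝 (∫ x, v x * g x ∂μ)) := by
  refine tendsto_integral_filter_of_dominated_convergence (fun x => |v x| * (M + 1))
    (Eventually.of_forall fun n => hv.1.mul (hf n).aestronglyMeasurable) ?_
    (hv.abs.mul_const _) (ae_of_all _ fun x => (h.tendsto_at x).const_mul _)
  filter_upwards [Metric.tendstoUniformly_iff.mp h 1 one_pos] with n hn
  refine ae_of_all _ fun x => ?_
  rw [norm_mul]
  refine mul_le_mul_of_nonneg_left ?_ (norm_nonneg _)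
  rw [Real.norm_eq_abs]
  linarith [abs_sub_abs_le_abs_sub (f n x) (g x), hM x, Real.dist_eq (g x) (f n x),
    abs_sub_comm (g x) (f n x), hn x]

end Integral

section WeakConvergence

variable {Ω : Type*} [MeasurableSpace Ω] {μ : Measure Ω}

/-- Weak `L¹` convergence of a sequence of real functions on a finite measure space. The test
functions are the bounded measurable ones, so that `WeakConvCube` is the special case of the
Lebesgue measure on the unit cube. -/
def WeakConv (μ : Measure Ω) (f : ℕ → Ω → ℝ) (F : Ω → ℝ) : Prop :=
  ∀ g : Ω → ℝ, Measurable g → (∃ M : ℝ, ∀ x, |g x| ≤ M) →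
    Tendsto (fun n => ∫ x, f n x * g x ∂μ) atTop (𝓝 (∫ x, F x * g x ∂μ))

theorem integrable_mul_of_abs_le {f g : Ω → ℝ} {M : ℝ} (hf : Integrable f μ)
    (hg : Measurable g) (hM : ∀ x, |g x| ≤ M) : Integrable (fun x => f x * g x) μ :=
  hf.mul_bdd (c := M) hg.aestronglyMeasurable (Eventually.of_forall hM)

theorem abs_integral_mul_sub_integral_mul_le {f f' g : Ω → ℝ} {M : ℝ} (hf : Integrable f μ)
    (hf' : Integrable f' μ) (hg : Measurable g) (hM : ∀ x, |g x| ≤ M) :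
    |∫ x, f x * g x ∂μ - ∫ x, f' x * g x ∂μ| ≤ M * ∫ x, |f x - f' x| ∂μ := by
  have hfg := integrable_mul_of_abs_le hf hg hM
  have hfg' := integrable_mul_of_abs_le hf' hg hM
  rw [← integral_sub hfg hfg', ← integral_const_mul]
  refine abs_integral_le_integral_abs.trans <|
    integral_mono (hfg.sub hfg').abs ((hf.sub hf').abs.const_mul M) fun x => ?_
  rw [← sub_mul, abs_mul, mul_comm]
  exact mul_le_mul_of_nonneg_right (hM x) (abs_nonneg _)

theorem weakConv_of_tendstoUniformly [IsFiniteMeasure μ] {f : ℕ → Ω → ℝ} {F : Ω → ℝ} {C : ℝ}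
    (hf : ∀ n, Measurable (f n)) (hC : ∀ x, |F x| ≤ C) (h : TendstoUniformly f F atTop) :
    WeakConv μ f F := fun g hg ⟨M, hM⟩ => by
  simpa only [mul_comm] using
    tendsto_integral_mul_of_tendstoUniformly (integrable_of_abs_le hg hM) hf hC h

theorem WeakConv.sub {f f' : ℕ → Ω → ℝ} {F F' : Ω → ℝ} (h : WeakConv μ f F)
    (h' : WeakConv μ f' F') (hf : ∀ n, Integrable (f n) μ) (hf' : ∀ n, Integrable (f' n) μ)
    (hF : Integrable F μ) (hF' : Integrable F' μ) :
    WeakConv μ (fun n x => f n x - f' n x) fun x => F x - F' x := by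
  rintro g hg ⟨M, hM⟩
  have hint {w : Ω → ℝ} (hw : Integrable w μ) := integrable_mul_of_abs_le hw hg hM
  simp only [sub_mul]
  simp_rw [integral_sub (hint (hf _)) (hint (hf' _)), integral_sub (hint hF) (hint hF')]
  exact (h g hg ⟨M, hM⟩).sub (h' g hg ⟨M, hM⟩)

theorem WeakConv.comp_strictMono {f : ℕ → Ω → ℝ} {F : Ω → ℝ} (h : WeakConv μ f F) {φ : ℕ → ℕ}
    (hφ : StrictMono φ) : WeakConv μ (fun n => f (φ n)) F :=
  fun g hg hb => (h g hg hb).comp hφ.tendsto_atTop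

theorem WeakConv.congr_ae {f : ℕ → Ω → ℝ} {F G : Ω → ℝ} (h : WeakConv μ f F) (hFG : F =ᵐ[μ] G) :
    WeakConv μ f G := fun g hg hb => by
  have hFGg : ∫ x, F x * g x ∂μ = ∫ x, G x * g x ∂μ :=
    integral_congr_ae (hFG.mul (EventuallyEq.refl _ g))
  exact hFGg ▸ h g hg hb

theorem WeakConv.of_uniform_approx {f : ℕ → Ω → ℝ} {F : Ω → ℝ} {h : ℕ → ℕ → Ω → ℝ}
    {G : ℕ → Ω → ℝ} (hf : ∀ n, Integrable (f n) μ) (hF : Integrable F μ)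
    (hh : ∀ k n, Integrable (h k n) μ) (hG : ∀ k, Integrable (G k) μ)
    (hhG : ∀ k, WeakConv μ (h k) (G k))
    (hfh : ∀ δ > 0, ∀ᶠ k in atTop, ∀ n, ∫ x, |f n x - h k n x| ∂μ ≤ δ)
    (hGF : Tendsto (fun k => ∫ x, |G k x - F x| ∂μ) atTop (𝓝 0)) : WeakConv μ f F := by
  rintro g hg ⟨M₀, hM₀⟩
  obtain ⟨M, hMpos, hM⟩ : ∃ M > 0, ∀ x, |g x| ≤ M :=
    ⟨max M₀ 1, by positivity, fun x => (hM₀ x).trans (le_max_left _ _)⟩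
  rw [Metric.tendsto_atTop]
  intro η hη
  have hη' : 0 < η / (3 * M) := by positivity
  obtain ⟨k, hk, hk'⟩ := ((hfh _ hη').and (hGF.eventually_lt_const hη')).exists
  obtain ⟨N, hN⟩ := Metric.tendsto_atTop.mp (hhG k g hg ⟨M, hM⟩) (η / 3) (by positivity)
  refine ⟨N, fun n hn => ?_⟩
  have hM3 : M * (η / (3 * M)) = η / 3 := by field_simp
  have near_f : |∫ x, f n x * g x ∂μ - ∫ x, h k n x * g x ∂μ| ≤ η / 3 :=
    (abs_integral_mul_sub_integral_mul_le (hf n) (hh k n) hg hM).trans <|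
      (mul_le_mul_of_nonneg_left (hk n) hMpos.le).trans_eq hM3
  have near_F : |∫ x, G k x * g x ∂μ - ∫ x, F x * g x ∂μ| < η / 3 :=
    (abs_integral_mul_sub_integral_mul_le (hG k) hF hg hM).trans_lt <|
      (mul_lt_mul_of_pos_left hk' hMpos).trans_eq hM3
  have near_G := hN n hn
  rw [Real.dist_eq, abs_lt] at near_G ⊢
  rw [abs_le] at near_f
  rw [abs_lt] at near_F
  constructor <;> linarith

theorem rightDeriv_affine_le_of_convexOn {Φ : ℝ → ℝ} (hΦ : ConvexOn ℝ Set.univ Φ) (a b : ℝ) :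
    Φ a + derivWithin Φ (Set.Ioi a) a * (b - a) ≤ Φ b := by
  have ha : a ∈ interior (Set.univ : Set ℝ) := by simp
  rcases lt_trichotomy b a with h | rfl | h
  · have := (hΦ.slope_le_leftDeriv_of_mem_interior (Set.mem_univ b) ha h).trans
      (hΦ.leftDeriv_le_rightDeriv_of_mem_interior ha)
    rw [slope_def_field, div_le_iff₀ (sub_pos.mpr h)] at this
    linarith
  · simp
  · have := hΦ.rightDeriv_le_slope_of_mem_interior ha (Set.mem_univ b) h
    rw [slope_def_field, le_div_iff₀ (sub_pos.mpr h)] at this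
    linarith

theorem monotone_rightDeriv_of_convexOn {Φ : ℝ → ℝ} (hΦ : ConvexOn ℝ Set.univ Φ) :
    Monotone fun a => derivWithin Φ (Set.Ioi a) a := by
  simpa [monotoneOn_univ] using hΦ.monotoneOn_rightDeriv

section Convex

variable [IsFiniteMeasure μ] {Φ : ℝ → ℝ} {f : ℕ → Ω → ℝ} {F : Ω → ℝ} {C : ℝ}

theorem WeakConv.setIntegral_convex_le (h : WeakConv μ f F) (hΦ : ConvexOn ℝ Set.univ Φ)
    (hΦ₀ : ∀ t, 0 ≤ Φ t) (hf : ∀ n, Integrable (f n) μ) (hF : Integrable F μ)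
    (hFm : Measurable F) (hΦf : ∀ n, Integrable (fun x => Φ (f n x)) μ)
    (hC : ∀ n, ∫ x, Φ (f n x) ∂μ ≤ C) (K : ℝ) :
    IntegrableOn (fun x => Φ (F x)) {x | |F x| ≤ K} μ ∧
      ∫ x in {x | |F x| ≤ K}, Φ (F x) ∂μ ≤ C := by
  set A := {x | |F x| ≤ K}
  set s : ℝ → ℝ := fun a => derivWithin Φ (Set.Ioi a) a
  set g := A.indicator fun x => s (F x)
  have hs : Monotone s := monotone_rightDeriv_of_convexOn hΦ
  have hAm : MeasurableSet A := measurableSet_le hFm.abs measurable_const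
  have hg : Measurable g := (hs.measurable.comp hFm).indicator hAm
  have hgM x : |g x| ≤ max |s (-K)| |s K| := by
    by_cases hx : x ∈ A
    · simpa only [g, Set.indicator_of_mem hx] using
        abs_le_max_abs_abs (hs (abs_le.mp hx).1) (hs (abs_le.mp hx).2)
    · simp [g, Set.indicator_of_notMem hx]
  have hΦF : IntegrableOn (fun x => Φ (F x)) A μ := by
    have hΦc : Continuous Φ := continuousOn_univ.mp (hΦ.continuousOn isOpen_univ)
    obtain ⟨B, hB⟩ := (isCompact_Icc (a := -K) (b := K)).exists_bound_of_continuousOn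
      hΦc.continuousOn
    exact Measure.integrableOn_of_bounded (measure_ne_top _ _)
      (hΦc.measurable.comp hFm).aestronglyMeasurable
      ((ae_restrict_iff' hAm).mpr (Eventually.of_forall fun x hx => hB _ (abs_le.mp hx)))
  have tangent n x : A.indicator (fun x => Φ (F x)) x + (f n x * g x - F x * g x) ≤ Φ (f n x) := by
    by_cases hx : x ∈ A
    · simpa only [g, Set.indicator_of_mem hx, ← sub_mul, mul_comm (f n x - F x)] using
        rightDeriv_affine_le_of_convexOn hΦ (F x) (f n x)
    · simpa [g, Set.indicator_of_notMem hx] using hΦ₀ (f n x)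
  have bound n : ∫ x in A, Φ (F x) ∂μ + (∫ x, f n x * g x ∂μ - ∫ x, F x * g x ∂μ) ≤ C := by
    have hfg := integrable_mul_of_abs_le (hf n) hg hgM
    have hFg := integrable_mul_of_abs_le hF hg hgM
    have hsub : Integrable (fun x => f n x * g x - F x * g x) μ := hfg.sub hFg
    have hA := hΦF.integrable_indicator hAm
    rw [← integral_indicator hAm, ← integral_sub hfg hFg, ← integral_add hA hsub]
    exact (integral_mono (hA.add hsub) (hΦf n) (tangent n)).trans (hC n)
  refine ⟨hΦF, le_of_tendsto (x := atTop) ?_ (Eventually.of_forall bound)⟩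
  simpa using ((h g hg ⟨_, hgM⟩).sub_const (∫ x, F x * g x ∂μ)).const_add
    (∫ x in A, Φ (F x) ∂μ)

theorem WeakConv.integral_convex_le (h : WeakConv μ f F) (hΦ : ConvexOn ℝ Set.univ Φ)
    (hΦ₀ : ∀ t, 0 ≤ Φ t) (hf : ∀ n, Integrable (f n) μ) (hF : Integrable F μ)
    (hΦf : ∀ n, Integrable (fun x => Φ (f n x)) μ) (hC : ∀ n, ∫ x, Φ (f n x) ∂μ ≤ C) :
    Integrable (fun x => Φ (F x)) μ ∧ ∫ x, Φ (F x) ∂μ ≤ C := by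
  obtain ⟨G, hGm, hFG⟩ := hF.aestronglyMeasurable.aemeasurable
  have hsublevel (K : ℕ) :=
    (h.congr_ae hFG).setIntegral_convex_le hΦ hΦ₀ hf (hF.congr hFG) hGm hΦf hC K
  have cover : AECover μ atTop fun K : ℕ => {x | |G x| ≤ K} :=
    ⟨Eventually.of_forall fun x => (eventually_ge_atTop ⌈|G x|⌉₊).mono fun K hK =>
      (Nat.le_ceil _).trans (Nat.cast_le.mpr hK),
      fun K => measurableSet_le hGm.abs measurable_const⟩
  have hint : Integrable (fun x => Φ (G x)) μ :=
    cover.integrable_of_integral_bounded_of_nonneg_ae C (fun K => (hsublevel K).1)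
      (Eventually.of_forall fun x => hΦ₀ _) (Eventually.of_forall fun K => (hsublevel K).2)
  have hΦFG : (fun x => Φ (F x)) =ᵐ[μ] fun x => Φ (G x) := hFG.fun_comp Φ
  refine ⟨hint.congr hΦFG.symm, (integral_congr_ae hΦFG).trans_le ?_⟩
  exact le_of_tendsto (cover.integral_tendsto_of_countably_generated hint)
    (Eventually.of_forall fun K => (hsublevel K).2)

theorem WeakConv.memLp (h : WeakConv μ f F) (hf : ∀ n, Integrable (f n) μ) (hF : Integrable F μ)
    (hfr : ∀ (r : ℕ) n, Integrable (fun x => |f n x| ^ r) μ)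
    (hC : ∀ r : ℕ, ∃ C, ∀ n, ∫ x, |f n x| ^ r ∂μ ≤ C) {q : ENNReal} (hq : q ≠ ⊤) :
    MemLp F q μ := by
  obtain ⟨r, hr⟩ := ENNReal.exists_nat_gt hq
  have hr₀ : (r : ENNReal) ≠ 0 := (bot_lt_of_lt hr).ne'
  obtain ⟨C, hC⟩ := hC r
  have hpow := (h.integral_convex_le (convexOn_univ_norm.pow (fun _ _ => norm_nonneg _) r)
    (fun t => pow_nonneg (norm_nonneg t) r) hf hF (hfr r) hC).1
  refine MemLp.mono_exponent ((integrable_norm_rpow_iff hF.1 hr₀ (ENNReal.natCast_ne_top r)).mp ?_)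
    hr.le
  simpa using hpow

theorem WeakConv.integral_abs_sub_le {w f' : ℕ → Ω → ℝ} {F' : Ω → ℝ} {a b : ℝ}
    (h : WeakConv μ f F) (h' : WeakConv μ f' F') (hf : ∀ n, Integrable (f n) μ)
    (hf' : ∀ n, Integrable (f' n) μ) (hw : ∀ n, Integrable (w n) μ) (hF : Integrable F μ)
    (hF' : Integrable F' μ) (ha : ∀ n, ∫ x, |w n x - f n x| ∂μ ≤ a)
    (hb : ∀ n, ∫ x, |w n x - f' n x| ∂μ ≤ b) : ∫ x, |F x - F' x| ∂μ ≤ a + b := by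
  have hsub n : Integrable (fun x => f n x - f' n x) μ := (hf n).sub (hf' n)
  refine ((h.sub h' hf hf' hF hF').integral_convex_le (convexOn_norm convex_univ) abs_nonneg hsub
    (hF.sub hF') (fun n => (hsub n).abs) fun n => ?_).2
  have hwf := ((hw n).sub (hf n)).abs
  have hwf' := ((hw n).sub (hf' n)).abs
  refine (integral_mono (hsub n).abs (hwf.add hwf') fun x => ?_).trans ?_
  · exact (abs_sub_le _ (w n x) _).trans_eq (by simp [abs_sub_comm])
  · exact (integral_add' hwf hwf').trans_le (add_le_add (ha n) (hb n))

end Convex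

end WeakConvergence

section HilbertSpace

variable {E : Type*} [NormedAddCommGroup E] [InnerProductSpace ℝ E] [CompleteSpace E]
  [TopologicalSpace.SeparableSpace E] {κ : Type*} [Countable κ]

theorem exists_subseq_tendsto_inner (x : κ → ℕ → E) (R : κ → ℝ) (hR : ∀ k n, ‖x k n‖ ≤ R k) :
    ∃ φ : ℕ → ℕ, StrictMono φ ∧ ∃ y : κ → E, ∀ k e,
      Tendsto (fun n => inner ℝ (x k (φ n)) e) atTop (𝓝 (inner ℝ (y k) e)) := by
  let B (k : κ) : Set (WeakDual ℝ E) := WeakDual.toStrongDual ⁻¹' Metric.closedBall 0 (R k)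
  have hB k : IsCompact (B k) := WeakDual.isCompact_closedBall _ _
  have : ∀ k, CompactSpace (B k) := fun k => isCompact_iff_compactSpace.mp (hB k)
  have : ∀ k, TopologicalSpace.MetrizableSpace (B k) :=
    fun k => WeakDual.metrizable_of_isCompact ℝ E (B k) (hB k)
  let T (n : ℕ) (k : κ) : B k :=
    ⟨StrongDual.toWeakDual (InnerProductSpace.toDual ℝ E (x k n)), by
      change InnerProductSpace.toDual ℝ E (x k n) ∈ Metric.closedBall 0 (R k)
      rw [mem_closedBall_zero_iff, LinearIsometryEquiv.norm_map]
      exact hR k n⟩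
  obtain ⟨L, φ, hφ, hL⟩ := CompactSpace.tendsto_subseq T
  refine ⟨φ, hφ, fun k => (InnerProductSpace.toDual ℝ E).symm (WeakDual.toStrongDual (L k).1),
    fun k e => ?_⟩
  have hLk : Tendsto (fun n => (T (φ n) k).1) atTop (𝓝 (L k).1) :=
    (continuous_subtype_val.tendsto _).comp (((continuous_apply k).tendsto L).comp hL)
  rw [InnerProductSpace.toDual_symm_apply]
  exact ((WeakDual.eval_continuous e).tendsto _).comp hLk

end HilbertSpace

section DunfordPettis

variable {Ω : Type*} [MeasurableSpace Ω] {μ : Measure Ω}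

section L2

variable [IsFiniteMeasure μ] [MeasurableSpace.CountablyGenerated Ω] {κ : Type*} [Countable κ]

theorem exists_subseq_weakConv_of_abs_le (g : κ → ℕ → Ω → ℝ) (B : κ → ℝ)
    (hg : ∀ k n, AEStronglyMeasurable (g k n) μ) (hB : ∀ k n x, |g k n x| ≤ B k) :
    ∃ φ : ℕ → ℕ, StrictMono φ ∧ ∃ h : κ → Ω → ℝ, (∀ k, Integrable (h k) μ) ∧
      ∀ k, WeakConv μ (fun n => g k (φ n)) (h k) := by
  have : Fact ((2 : ENNReal) ≠ ⊤) := ⟨by simp⟩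
  have hmem k n : MemLp (g k n) 2 μ := .of_bound (hg k n) (B k) (Eventually.of_forall (hB k n))
  have hR k n : ‖(hmem k n).toLp‖ ≤ (measureUnivNNReal μ : ℝ) ^ (2 : ENNReal).toReal⁻¹ * |B k| :=
    Lp.norm_le_of_ae_bound (abs_nonneg _) <| (hmem k n).coeFn_toLp.mono fun x hx =>
      hx ▸ (hB k n x).trans (le_abs_self _)
  obtain ⟨φ, hφ, h, hconv⟩ := exists_subseq_tendsto_inner (fun k n => (hmem k n).toLp) _ hR
  refine ⟨φ, hφ, fun k => h k, fun k => (Lp.memLp (h k)).integrable (by norm_num),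
    fun k ψ hψ ⟨M, hM⟩ => ?_⟩
  have hψ2 : MemLp ψ 2 μ := .of_bound hψ.aestronglyMeasurable M (Eventually.of_forall hM)
  have inner_eq (f : Lp ℝ 2 μ) (w : Ω → ℝ) (hw : f =ᵐ[μ] w) :
      inner ℝ f hψ2.toLp = ∫ x, w x * ψ x ∂μ := by
    rw [L2.inner_def]
    refine integral_congr_ae ?_
    filter_upwards [hw, hψ2.coeFn_toLp] with x hx hx'
    simp [hx, hx', mul_comm]
  simpa only [inner_eq _ _ (hmem k _).coeFn_toLp, inner_eq _ _ (EventuallyEq.refl _ (h k : Ω → ℝ))]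
    using hconv k hψ2.toLp

end L2

/-- Truncation of a real number at height `K`. -/
def clip (K t : ℝ) : ℝ := max (-K) (min t K)

theorem continuous_clip (K : ℝ) : Continuous (clip K) := by
  unfold clip; fun_prop

theorem abs_clip_le {K : ℝ} (hK : 0 ≤ K) (t : ℝ) : |clip K t| ≤ K :=
  abs_le.mpr ⟨le_max_left _ _, max_le (by linarith) (min_le_right _ _)⟩

theorem abs_sub_clip_le {K : ℝ} (hK : 0 ≤ K) (t : ℝ) : |t - clip K t| ≤ |t| := by
  unfold clip; grind

theorem clip_of_abs_le {K t : ℝ} (h : |t| ≤ K) : clip K t = t := by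
  unfold clip; grind

theorem eventually_integral_abs_sub_clip_le {ι : Type*} {f : ι → Ω → ℝ}
    (hf : UniformIntegrable f 1 μ) {δ : ℝ} (hδ : 0 < δ) :
    ∀ᶠ K : ℕ in atTop, ∀ i, ∫ x, |f i x - clip K (f i x)| ∂μ ≤ δ := by
  obtain ⟨C, hC⟩ := hf.spec one_ne_zero ENNReal.one_ne_top hδ
  filter_upwards [eventually_ge_atTop ⌈C⌉₊] with K hK i
  have hCK : (C : ℝ) ≤ K := by exact_mod_cast (Nat.le_ceil C).trans (Nat.cast_le.mpr hK)
  have hmeas : AEStronglyMeasurable (fun x => |f i x - clip K (f i x)|) μ :=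
    ((hf.1 i).sub ((continuous_clip K).comp_aestronglyMeasurable (hf.1 i))).norm
  rw [integral_eq_lintegral_of_nonneg_ae (Eventually.of_forall fun x => abs_nonneg _) hmeas]
  refine ENNReal.toReal_le_of_le_ofReal hδ.le (le_trans ?_ (hC i))
  rw [eLpNorm_one_eq_lintegral_enorm]
  refine lintegral_mono fun x => ?_
  by_cases hx : x ∈ {x | C ≤ ‖f i x‖₊}
  · simpa only [Set.indicator_of_mem hx, Real.enorm_eq_ofReal_abs] using
      ENNReal.ofReal_le_ofReal (abs_sub_clip_le K.cast_nonneg (f i x))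
  · have hlt : |f i x| < C := NNReal.coe_lt_coe.mpr (not_le.mp hx)
    simp [Set.indicator_of_notMem hx, clip_of_abs_le (hlt.le.trans hCK)]

theorem exists_tendsto_integral_abs_sub_of_cauchy {h : ℕ → Ω → ℝ}
    (hint : ∀ k, Integrable (h k) μ)
    (hcau : ∀ δ > 0, ∃ N, ∀ k ≥ N, ∫ x, |h k x - h N x| ∂μ < δ) :
    ∃ F : Ω → ℝ, Integrable F μ ∧
      Tendsto (fun k => ∫ x, |h k x - F x| ∂μ) atTop (𝓝 0) := by
  have norm_eq {f g : Ω → ℝ} (hf : Integrable f μ) (hg : Integrable g μ) :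
      ‖hf.toL1 f - hg.toL1 g‖ = ∫ x, |f x - g x| ∂μ := by
    rw [← Integrable.toL1_sub, L1.norm_of_fun_eq_integral_norm]
    rfl
  have hX : CauchySeq fun k => (hint k).toL1 := by
    refine Metric.cauchySeq_iff'.mpr fun δ hδ => ?_
    simpa only [dist_eq_norm, norm_eq] using hcau δ hδ
  obtain ⟨Y, hY⟩ := cauchySeq_tendsto_of_complete hX
  have hY' : (L1.integrable_coeFn Y).toL1 Y = Y := Integrable.toL1_coeFn Y _
  refine ⟨Y, L1.integrable_coeFn Y, ?_⟩
  simpa only [← norm_eq (hint _) (L1.integrable_coeFn Y), hY'] using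
    tendsto_iff_norm_sub_tendsto_zero.mp hY

/-- The Dunford–Pettis theorem. -/
theorem exists_subseq_weakConv_of_uniformIntegrable [IsFiniteMeasure μ]
    [MeasurableSpace.CountablyGenerated Ω] {ι : Type*} [Countable ι] (f : ι → ℕ → Ω → ℝ)
    (hf : ∀ i, UniformIntegrable (f i) 1 μ) :
    ∃ φ : ℕ → ℕ, StrictMono φ ∧ ∃ F : ι → Ω → ℝ, (∀ i, Integrable (F i) μ) ∧
      ∀ i, WeakConv μ (fun n => f i (φ n)) (F i) := by
  have hfint i n : Integrable (f i n) μ := memLp_one_iff_integrable.mp ((hf i).memLp n)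
  have hclip (i) (K : ℕ) (n) : Integrable (fun x => clip K (f i n x)) μ :=
    .of_bound ((continuous_clip K).comp_aestronglyMeasurable (hfint i n).1) K
      (Eventually.of_forall fun x => abs_clip_le K.cast_nonneg _)
  obtain ⟨φ, hφ, h, hint, hconv⟩ := exists_subseq_weakConv_of_abs_le
    (fun (k : ι × ℕ) n x => clip k.2 (f k.1 n x)) (fun k => k.2) (fun k n => (hclip _ _ n).1)
    (fun k n x => abs_clip_le k.2.cast_nonneg _)
  have herr i δ (hδ : 0 < δ) := eventually_integral_abs_sub_clip_le (hf i) hδ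
  have cauchy i δ (hδ : 0 < δ) : ∃ N, ∀ k ≥ N, ∫ x, |h (i, k) x - h (i, N) x| ∂μ < δ := by
    obtain ⟨N, hN⟩ := eventually_atTop.mp (herr i (δ / 4) (by positivity))
    exact ⟨N, fun k hk => ((hconv (i, k)).integral_abs_sub_le (hconv (i, N)) (fun n => hclip i k _)
      (fun n => hclip i N _) (fun n => hfint i (φ n)) (hint _) (hint _) (fun n => hN k hk _)
      fun n => hN N le_rfl _).trans_lt (by linarith)⟩
  choose F hFint hF using fun i =>
    exists_tendsto_integral_abs_sub_of_cauchy (fun k => hint (i, k)) (cauchy i)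
  refine ⟨φ, hφ, F, hFint, fun i => ?_⟩
  exact .of_uniform_approx (fun n => hfint i _) (hFint i) (fun k n => hclip i k (φ n))
    (fun k => hint (i, k)) (fun k => hconv (i, k))
    (fun δ hδ => (herr i δ hδ).mono fun k hk n => hk (φ n)) (hF i)

/-- The de la Vallée-Poussin criterion. -/
theorem uniformIntegrable_of_superlinear [IsFiniteMeasure μ] {ι : Type*} {f : ι → Ω → ℝ}
    {Φ : ℝ → ℝ} {C : ℝ} (hΦ₀ : ∀ t, 0 ≤ t → 0 ≤ Φ t)
    (hΦ : Tendsto (fun t => Φ t / t) atTop atTop) (hf : ∀ i, AEStronglyMeasurable (f i) μ)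
    (hΦf : ∀ i, Integrable (fun x => Φ |f i x|) μ) (hC : ∀ i, ∫ x, Φ |f i x| ∂μ ≤ C) :
    UniformIntegrable f 1 μ := by
  refine uniformIntegrable_of le_rfl ENNReal.one_ne_top hf fun δ hδ => ?_
  obtain ⟨B, hB, hCB⟩ : ∃ B > 0, C ≤ B := ⟨max C 1, by positivity, le_max_left _ _⟩
  obtain ⟨K, hK⟩ := eventually_atTop.mp (hΦ.eventually_ge_atTop (B / δ))
  have le_Φ t (ht : max K 1 ≤ t) : t ≤ δ / B * Φ t := by
    have ht0 : 0 < t := zero_lt_one.trans_le ((le_max_right _ _).trans ht)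
    have := (le_div_iff₀ ht0).mp (hK t ((le_max_left _ _).trans ht))
    calc t = δ / B * (B / δ * t) := by field_simp
      _ ≤ δ / B * Φ t := by gcongr
  have Φ_nonneg i x : 0 ≤ δ / B * Φ |f i x| := mul_nonneg (by positivity) (hΦ₀ _ (abs_nonneg _))
  refine ⟨(max K 1).toNNReal, fun i => ?_⟩
  rw [eLpNorm_one_eq_lintegral_enorm]
  calc ∫⁻ x, ‖({x | (max K 1).toNNReal ≤ ‖f i x‖₊}.indicator (f i)) x‖ₑ ∂μ
      ≤ ∫⁻ x, ENNReal.ofReal (δ / B * Φ |f i x|) ∂μ := by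
        refine lintegral_mono fun x => ?_
        by_cases hx : x ∈ {x | (max K 1).toNNReal ≤ ‖f i x‖₊}
        · rw [Set.indicator_of_mem hx, Real.enorm_eq_ofReal_abs]
          exact ENNReal.ofReal_le_ofReal (le_Φ _ (Real.toNNReal_le_iff_le_coe.mp hx))
        · simp [Set.indicator_of_notMem hx]
    _ = ENNReal.ofReal (δ / B * ∫ x, Φ |f i x| ∂μ) := by
        rw [← integral_const_mul, ofReal_integral_eq_lintegral_ofReal ((hΦf i).const_mul _)
          (Eventually.of_forall (Φ_nonneg i))]
    _ ≤ ENNReal.ofReal δ := by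
        refine ENNReal.ofReal_le_ofReal ?_
        calc δ / B * ∫ x, Φ |f i x| ∂μ ≤ δ / B * B := by gcongr; exact (hC i).trans hCB
          _ = δ := by field_simp

end DunfordPettis

section UniformIntegrable

variable {Ω : Type*} [MeasurableSpace Ω] {μ : Measure Ω}

theorem uniformIntegrable_comp_index {ι κ : Type*} {f : ι → Ω → ℝ} {p : ENNReal}
    (hf : UniformIntegrable f p μ) (φ : κ → ι) : UniformIntegrable (fun k => f (φ k)) p μ :=
  ⟨fun k => hf.1 (φ k), fun _ hδ => (hf.2.1 hδ).imp fun _ h => h.imp fun _ h' k => h' (φ k),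
    hf.2.2.imp fun _ h k => h (φ k)⟩

variable [IsFiniteMeasure μ]

theorem tendsto_integral_mul_of_uniformIntegrable {f R : ℕ → Ω → ℝ} {M : ℝ}
    (hf : UniformIntegrable f 1 μ) (hR : ∀ n, Measurable (R n)) (hM : ∀ n x, |R n x| ≤ M)
    (hlim : ∀ᵐ x ∂μ, Tendsto (fun n => R n x) atTop (𝓝 0)) :
    Tendsto (fun n => ∫ x, f n x * R n x ∂μ) atTop (𝓝 0) := by
  have hfint n : Integrable (f n) μ := memLp_one_iff_integrable.mp (hf.memLp n)
  have hclip (K : ℕ) n : Integrable (fun x => clip K (f n x)) μ :=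
    .of_bound ((continuous_clip K).comp_aestronglyMeasurable (hfint n).1) K
      (Eventually.of_forall fun x => abs_clip_le K.cast_nonneg _)
  have clip_tendsto (K : ℕ) :
      Tendsto (fun n => ∫ x, clip K (f n x) * R n x ∂μ) atTop (𝓝 0) := by
    have hbound n x : |clip K (f n x) * R n x| ≤ K * |R n x| := by
      rw [abs_mul]
      exact mul_le_mul_of_nonneg_right (abs_clip_le K.cast_nonneg _) (abs_nonneg _)
    simpa using tendsto_integral_of_dominated_convergence (f := fun _ => (0 : ℝ)) (fun _ => K * M)
      (fun n => (hclip K n).1.mul (hR n).aestronglyMeasurable) (integrable_const _)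
      (fun n => Eventually.of_forall fun x => (hbound n x).trans (by gcongr; exact hM n x))
      (hlim.mono fun x hx => squeeze_zero_norm (hbound · x) (by simpa using hx.abs.const_mul _))
  rw [Metric.tendsto_atTop]
  intro δ hδ
  obtain ⟨K, hK⟩ := (eventually_integral_abs_sub_clip_le hf
    (by positivity : 0 < δ / (2 * (|M| + 1)))).exists
  obtain ⟨N, hN⟩ := Metric.tendsto_atTop.mp (clip_tendsto K) (δ / 2) (half_pos hδ)
  refine ⟨N, fun n hn => ?_⟩
  have hclipN := hN n hn
  rw [Real.dist_eq, sub_zero] at hclipN ⊢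
  have herr : |∫ x, f n x * R n x ∂μ - ∫ x, clip K (f n x) * R n x ∂μ| < δ / 2 :=
    calc _ ≤ |M| * ∫ x, |f n x - clip K (f n x)| ∂μ :=
          abs_integral_mul_sub_integral_mul_le (hfint n) (hclip K n) (hR n)
            fun x => (hM n x).trans (le_abs_self M)
      _ ≤ |M| * (δ / (2 * (|M| + 1))) := by gcongr; exact hK n
      _ < (|M| + 1) * (δ / (2 * (|M| + 1))) := by gcongr; linarith
      _ = δ / 2 := by field_simp
  linarith [abs_sub_abs_le_abs_sub (∫ x, f n x * R n x ∂μ) (∫ x, clip K (f n x) * R n x ∂μ)]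

theorem uniformIntegrable_of_integral_sq_le {ι : Type*} {f : ι → Ω → ℝ} {C : ℝ}
    (hf : ∀ i, AEStronglyMeasurable (f i) μ) (hf₂ : ∀ i, Integrable (fun x => |f i x| ^ 2) μ)
    (hC : ∀ i, ∫ x, |f i x| ^ 2 ∂μ ≤ C) :
    UniformIntegrable f 1 μ :=
  uniformIntegrable_of_superlinear (fun t _ => sq_nonneg t)
    (tendsto_id.congr fun t => by rw [sq, mul_self_div_self, id]) hf hf₂ hC

theorem uniformIntegrable_comp_measurePreserving {Ω' : Type*} [MeasurableSpace Ω']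
    {μ' : Measure Ω'} {ι : Type*} {f : ι → Ω' → ℝ} {T : ι → Ω → Ω'}
    (hf : UniformIntegrable f 1 μ') (hT : ∀ i, MeasurePreserving (T i) μ μ') :
    UniformIntegrable (fun i => f i ∘ T i) 1 μ := by
  refine uniformIntegrable_of le_rfl ENNReal.one_ne_top
    (fun i => (hf.1 i).comp_measurePreserving (hT i)) fun δ hδ => ?_
  obtain ⟨C, hC⟩ := hf.spec one_ne_zero ENNReal.one_ne_top hδ
  refine ⟨C, fun i => le_trans (le_of_eq ?_) (hC i)⟩
  have hset : NullMeasurableSet {x | C ≤ ‖f i x‖₊} μ' :=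
    nullMeasurableSet_le aemeasurable_const (hf.1 i).nnnorm.aemeasurable
  rw [← eLpNorm_comp_measurePreserving ((hf.1 i).indicator₀ hset) (hT i)]
  rfl

end UniformIntegrable

section Torus

variable {d : ℕ}

theorem measurableSet_cube (d : ℕ) : MeasurableSet (cube d) :=
  MeasurableSet.univ_pi fun _ => measurableSet_Ico

theorem volume_cube (d : ℕ) : volume (cube d) = 1 := by
  rw [cube, Real.volume_pi_Ico]
  simp

instance isProbabilityMeasure_restrict_cube (d : ℕ) :
    IsProbabilityMeasure (volume.restrict (cube d)) :=
  ⟨by rw [Measure.restrict_apply_univ, volume_cube]⟩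

theorem cube_subset_Icc (d : ℕ) : cube d ⊆ Set.Icc (0 : Fin d → ℝ) 1 := fun _ hx =>
  ⟨fun i => (hx i (Set.mem_univ i)).1, fun i => (hx i (Set.mem_univ i)).2.le⟩

/-- The componentwise fractional part, i.e. the representative in the unit cell of a point of the
torus. -/
def fractVec (x : Fin d → ℝ) : Fin d → ℝ := fun i => Int.fract (x i)

theorem fractVec_mem_cube (x : Fin d → ℝ) : fractVec x ∈ cube d := fun _ _ =>
  ⟨Int.fract_nonneg _, Int.fract_lt_one _⟩

theorem fractVec_of_mem_cube {x : Fin d → ℝ} (hx : x ∈ cube d) : fractVec x = x :=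
  funext fun i => Int.fract_eq_self.mpr (hx i (Set.mem_univ i))

theorem fractVec_add_intCast (x : Fin d → ℝ) (k : Fin d → ℤ) :
    fractVec (fun i => x i + (k i : ℝ)) = fractVec x :=
  funext fun _ => Int.fract_add_intCast _ _

@[fun_prop]
theorem measurable_fractVec : Measurable (fractVec : (Fin d → ℝ) → Fin d → ℝ) :=
  measurable_pi_lambda _ fun i => measurable_fract.comp (measurable_pi_apply i)

theorem ZPer.apply_fractVec {f : (Fin d → ℝ) → ℝ} (hf : ZPer f) (x : Fin d → ℝ) :
    f (fractVec x) = f x := by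
  rw [← hf (fractVec x) fun i => ⌊x i⌋]
  exact congrArg f (funext fun i => Int.fract_add_floor (x i))

theorem setIntegral_cube_fractVec (f : (Fin d → ℝ) → (Fin d → ℝ) → ℝ) :
    ∫ x in cube d, f (fractVec x) x = ∫ x in cube d, f x x :=
  setIntegral_congr_fun (measurableSet_cube d) fun x hx => by simp only [fractVec_of_mem_cube hx]

theorem zPer_comp_fractVec (f : (Fin d → ℝ) → ℝ) : ZPer fun x => f (fractVec x) :=
  fun x k => congrArg f (fractVec_add_intCast x k)

theorem ZPer.comp_add_right {f : (Fin d → ℝ) → ℝ} (hf : ZPer f) (a : Fin d → ℝ) :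
    ZPer fun x => f (x + a) := fun x k => by
  refine Eq.trans (congrArg f ?_) (hf (x + a) k)
  exact funext fun i => add_right_comm _ _ _

theorem ZPer.mul {f g : (Fin d → ℝ) → ℝ} (hf : ZPer f) (hg : ZPer g) : ZPer fun x => f x * g x :=
  fun x k => congrArg₂ (· * ·) (hf x k) (hg x k)

section Integral

theorem isAddFundamentalDomain_cube (d : ℕ) : IsAddFundamentalDomain
    (Submodule.span ℤ (Set.range (Pi.basisFun ℝ (Fin d)))).toAddSubgroup (cube d) volume := by
  have := ZSpan.isAddFundamentalDomain' (Pi.basisFun ℝ (Fin d)) volume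
  rwa [ZSpan.fundamentalDomain_pi_basisFun] at this

theorem ZPer.apply_vadd {f : (Fin d → ℝ) → ℝ} (hf : ZPer f)
    (g : (Submodule.span ℤ (Set.range (Pi.basisFun ℝ (Fin d)))).toAddSubgroup) (x : Fin d → ℝ) :
    f (g +ᵥ x) = f x := by
  obtain ⟨g, hg⟩ := g
  obtain ⟨k, hk⟩ := Classical.skolem.mp ((Module.Basis.mem_span_iff_repr_mem ..).mp hg)
  rw [← hf x k]
  refine congrArg f (funext fun i => ?_)
  change g i + x i = _
  rw [add_comm, add_right_inj]
  simpa using (hk i).symm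

open scoped Pointwise in
theorem ZPer.setIntegral_cube_add_right {f : (Fin d → ℝ) → ℝ} (hf : ZPer f) (a : Fin d → ℝ) :
    ∫ x in cube d, f (x + a) = ∫ x in cube d, f x := by
  have hcube : (fun x => x + a) ⁻¹' (a +ᵥ cube d) = cube d := by
    ext x
    rw [Set.mem_preimage, add_comm x a, ← vadd_eq_add, Set.vadd_mem_vadd_set_iff]
  have hmap := (measurePreserving_add_right volume a).setIntegral_preimage_emb
    (measurableEmbedding_addRight a) f (a +ᵥ cube d)
  rw [hcube] at hmap
  have : Countable (Submodule.span ℤ (Set.range (Pi.basisFun ℝ (Fin d)))).toAddSubgroup :=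
    inferInstanceAs (Countable (Submodule.span ℤ (Set.range (Pi.basisFun ℝ (Fin d)))))
  exact hmap.trans <| ((isAddFundamentalDomain_cube d).vadd_of_comm a).setIntegral_eq
    (isAddFundamentalDomain_cube d) hf.apply_vadd

theorem ZPer.exists_abs_le {f : (Fin d → ℝ) → ℝ} (hf : ZPer f) (hc : Continuous f) :
    ∃ M, ∀ x, |f x| ≤ M := by
  obtain ⟨M, hM⟩ := (isCompact_Icc (a := (0 : Fin d → ℝ)) (b := 1)).exists_bound_of_continuousOn
    hc.continuousOn
  exact ⟨M, fun x => hf.apply_fractVec x ▸ hM _ (cube_subset_Icc d (fractVec_mem_cube x))⟩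

theorem integrable_cube_of_continuous {f : (Fin d → ℝ) → ℝ} (hc : Continuous f) :
    Integrable f (volume.restrict (cube d)) :=
  (hc.continuousOn.integrableOn_compact isCompact_Icc).mono_set (cube_subset_Icc d)

end Integral

section PartialDerivatives

variable {f g : (Fin d → ℝ) → ℝ} (i : Fin d)

theorem contDiff_pder (hf : ContDiff ℝ (⊤ : ℕ∞) f) : ContDiff ℝ (⊤ : ℕ∞) (pder i f) :=
  (hf.fderiv_right (m := (⊤ : ℕ∞)) (by simp)).clm_apply contDiff_const

theorem ZPer.pder (hf : ZPer f) : ZPer (pder i f) := fun x k => by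
  have hfk : f = fun z => f (z + fun j => (k j : ℝ)) := funext fun z => (hf z k).symm
  unfold _root_.pder
  conv_rhs => rw [hfk, fderiv_comp_add_right]
  rfl

theorem hasDerivAt_comp_line (hf : Differentiable ℝ f) (x h : Fin d → ℝ) (t : ℝ) :
    HasDerivAt (fun t : ℝ => f (x + t • h)) (∑ i, h i * pder i f (x + t • h)) t := by
  have hline : HasDerivAt (fun t : ℝ => x + t • h) h t := by
    simpa using ((hasDerivAt_id t).smul_const h).const_add x
  have hval : ∑ i, h i * pder i f (x + t • h) = fderiv ℝ f (x + t • h) h := by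
    simp only [pder, ← smul_eq_mul, ← map_smul, ← map_sum, ← pi_eq_sum_univ' h]
  exact hval ▸ (hf (x + t • h)).hasFDerivAt.comp_hasDerivAt t hline

theorem pder_mul (hf : Differentiable ℝ f) (hg : Differentiable ℝ g) (x : Fin d → ℝ) :
    pder i (fun z => f z * g z) x = f x * pder i g x + pder i f x * g x := by
  simp [pder, fderiv_fun_mul (hf x) (hg x), mul_comm]

theorem pder_comp_smul (c : ℝ) (f : (Fin d → ℝ) → ℝ) (x : Fin d → ℝ) :
    pder i (fun z => f (c • z)) x = c * pder i f (c • x) := by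
  simp [pder, fderiv_comp_smul]

theorem intervalIntegral_pder_eq_zero (hf : ContDiff ℝ (⊤ : ℕ∞) f) (hfp : ZPer f)
    (x : Fin d → ℝ) : ∫ t in (0 : ℝ)..1, pder i f (x + t • Pi.single i 1) = 0 := by
  have hcont := (contDiff_pder i hf).continuous
  have hderiv (t : ℝ) : HasDerivAt (fun t : ℝ => f (x + t • Pi.single i 1))
      (pder i f (x + t • Pi.single i 1)) t := by
    simpa [Pi.single_apply] using
      hasDerivAt_comp_line (hf.differentiable (by simp)) x (Pi.single i 1) t
  rw [intervalIntegral.integral_eq_sub_of_hasDerivAt (fun t _ => hderiv t)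
    (Continuous.intervalIntegrable (by fun_prop) _ _), sub_eq_zero, zero_smul, add_zero,
    ← hfp x (Pi.single i 1)]
  exact congrArg f (funext fun j => by by_cases hj : j = i <;> simp [hj])

theorem setIntegral_cube_pder_eq_zero (hf : ContDiff ℝ (⊤ : ℕ∞) f) (hfp : ZPer f) :
    ∫ x in cube d, pder i f x = 0 := by
  have hcont := (contDiff_pder i hf).continuous
  obtain ⟨M, hM⟩ := (hfp.pder i).exists_abs_le hcont
  calc ∫ x in cube d, pder i f x
      = ∫ t in Set.Ioc (0 : ℝ) 1, ∫ x in cube d, pder i f (x + t • Pi.single i 1) := by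
        simp only [(hfp.pder i).setIntegral_cube_add_right]
        simp
    _ = ∫ x in cube d, ∫ t in Set.Ioc (0 : ℝ) 1, pder i f (x + t • Pi.single i 1) :=
        (integral_integral_swap (integrable_of_abs_le
          (Continuous.measurable (by unfold uncurry; fun_prop)) fun p => hM _)).symm
    _ = 0 := by
        simp only [← intervalIntegral.integral_of_le zero_le_one,
          intervalIntegral_pder_eq_zero i hf hfp, integral_zero]

theorem setIntegral_cube_mul_pder (hf : ContDiff ℝ (⊤ : ℕ∞) f) (hfp : ZPer f)
    (hg : ContDiff ℝ (⊤ : ℕ∞) g) (hgp : ZPer g) :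
    ∫ x in cube d, f x * pder i g x = - ∫ x in cube d, pder i f x * g x := by
  have hfg := setIntegral_cube_pder_eq_zero i (hf.mul hg) (hfp.mul hgp)
  have hf' := (contDiff_pder i hf).continuous
  have hg' := (contDiff_pder i hg).continuous
  have hfc := hf.continuous
  have hgc := hg.continuous
  simp only [pder_mul i (hf.differentiable (by simp)) (hg.differentiable (by simp))] at hfg
  rw [integral_add (integrable_cube_of_continuous (by fun_prop))
    (integrable_cube_of_continuous (by fun_prop))] at hfg
  exact eq_neg_of_add_eq_zero_left hfg

end PartialDerivatives

section GradNorm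

variable {u : (Fin d → ℝ) → ℝ}

/-- The `ℓ¹` norm of the gradient. -/
def gradNorm (u : (Fin d → ℝ) → ℝ) (x : Fin d → ℝ) : ℝ := ∑ i, |pder i u x|

theorem continuous_gradNorm (hu : ContDiff ℝ (⊤ : ℕ∞) u) : Continuous (gradNorm u) := by
  have := fun i => (contDiff_pder i hu).continuous
  unfold gradNorm
  fun_prop

theorem ZPer.gradNorm (hu : ZPer u) : ZPer (gradNorm u) := fun x k =>
  Finset.sum_congr rfl fun i _ => by rw [hu.pder i x k]

theorem gradNorm_nonneg (u : (Fin d → ℝ) → ℝ) (x : Fin d → ℝ) : 0 ≤ gradNorm u x :=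
  Finset.sum_nonneg fun _ _ => abs_nonneg _

theorem abs_pder_le_gradNorm (u : (Fin d → ℝ) → ℝ) (i : Fin d) (x : Fin d → ℝ) :
    |pder i u x| ≤ gradNorm u x :=
  Finset.single_le_sum (f := fun i => |pder i u x|) (fun _ _ => abs_nonneg _) (Finset.mem_univ i)

theorem abs_sub_le_integral_gradNorm (hu : ContDiff ℝ (⊤ : ℕ∞) u) (x h : Fin d → ℝ) {c : ℝ}
    (hc : ∀ i, |h i| ≤ c) :
    |u (x + h) - u x| ≤ c * ∫ t in (0 : ℝ)..1, gradNorm u (x + t • h) := by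
  have hpder := fun i => (contDiff_pder i hu).continuous
  have hgrad := continuous_gradNorm hu
  have hFTC := intervalIntegral.integral_eq_sub_of_hasDerivAt (a := 0) (b := 1)
    (fun t _ => hasDerivAt_comp_line (hu.differentiable (by simp)) x h t)
    (Continuous.intervalIntegrable (by fun_prop) _ _)
  simp only [one_smul, zero_smul, add_zero] at hFTC
  rw [← hFTC, ← intervalIntegral.integral_const_mul]
  refine (intervalIntegral.abs_integral_le_integral_abs zero_le_one).trans <|
    intervalIntegral.integral_mono_on zero_le_one
      (Continuous.intervalIntegrable (by fun_prop) _ _)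
      (Continuous.intervalIntegrable (by fun_prop) _ _) fun t _ => ?_
  rw [gradNorm, Finset.mul_sum]
  refine (Finset.abs_sum_le_sum_abs _ _).trans (Finset.sum_le_sum fun i _ => ?_)
  rw [abs_mul]
  exact mul_le_mul_of_nonneg_right (hc i) (abs_nonneg _)

end GradNorm

end Torus

section CellMeasure

variable {d : ℕ}

/-- The probability measure of `𝕋^d × 𝒴^d`, carried by the product of two unit cells. -/
abbrev cellMeasure (d : ℕ) : Measure ((Fin d → ℝ) × (Fin d → ℝ)) :=
  (volume.restrict (cube d)).prod (volume.restrict (cube d))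

theorem ae_cellMeasure_mem (d : ℕ) : ∀ᵐ p ∂cellMeasure d, p.1 ∈ cube d ∧ p.2 ∈ cube d := by
  rw [cellMeasure, Measure.prod_restrict]
  exact ae_restrict_mem ((measurableSet_cube d).prod (measurableSet_cube d))

theorem measurePreserving_fractVec_add (a : Fin d → ℝ) :
    MeasurePreserving (fun x => fractVec (x + a)) (volume.restrict (cube d))
      (volume.restrict (cube d)) := by
  have hmeas (a : Fin d → ℝ) : Measurable fun x : Fin d → ℝ => fractVec (x + a) := by fun_prop
  refine ⟨hmeas a, Measure.ext fun A hA => ?_⟩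
  have measureReal_preimage (a : Fin d → ℝ) :
      (volume.restrict (cube d)).real ((fun x => fractVec (x + a)) ⁻¹' A) =
        ∫ x in cube d, A.indicator 1 (fractVec (x + a)) :=
    (integral_indicator_one (hmeas a hA)).symm
  have hcube : (fun x => fractVec (x + 0)) ⁻¹' A =ᵐ[volume.restrict (cube d)] A := by
    filter_upwards [ae_restrict_mem (measurableSet_cube d)] with x hx
    change (fractVec (x + 0) ∈ A) = (x ∈ A)
    rw [add_zero, fractVec_of_mem_cube hx]
  rw [Measure.map_apply (hmeas a) hA, ← measure_congr hcube, ← measureReal_eq_measureReal_iff,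
    measureReal_preimage, measureReal_preimage]
  simpa only [add_zero] using (zPer_comp_fractVec (A.indicator 1)).setIntegral_cube_add_right a

theorem measurePreserving_shear_snd {h : (Fin d → ℝ) → Fin d → ℝ} (hh : Measurable h) :
    MeasurePreserving (fun p : (Fin d → ℝ) × (Fin d → ℝ) => (p.1, fractVec (p.2 + h p.1)))
      (cellMeasure d) (cellMeasure d) :=
  (MeasurePreserving.id _).skew_product (g := fun x z => fractVec (z + h x))
    (by unfold uncurry; fun_prop)
    (Eventually.of_forall fun x => (measurePreserving_fractVec_add (h x)).map_eq)

theorem measurePreserving_shear_fst {h : (Fin d → ℝ) → Fin d → ℝ} (hh : Measurable h) :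
    MeasurePreserving (fun p : (Fin d → ℝ) × (Fin d → ℝ) => (fractVec (p.1 + h p.2), p.2))
      (cellMeasure d) (cellMeasure d) :=
  (Measure.measurePreserving_swap.comp (measurePreserving_shear_snd hh)).comp
    Measure.measurePreserving_swap

theorem integrable_cellMeasure_of_continuous {f : (Fin d → ℝ) × (Fin d → ℝ) → ℝ}
    (hf : Continuous f) : Integrable f (cellMeasure d) := by
  rw [cellMeasure, Measure.prod_restrict]
  exact (hf.continuousOn.integrableOn_compact (isCompact_Icc.prod isCompact_Icc)).mono_set
    (Set.prod_mono (cube_subset_Icc d) (cube_subset_Icc d))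

end CellMeasure

section OpenCell

variable {d : ℕ}

/-- The interior of the unit cell. -/
def openCube (d : ℕ) : Set (Fin d → ℝ) := Set.univ.pi fun _ => Set.Ioo (0 : ℝ) 1

theorem isOpen_openCube (d : ℕ) : IsOpen (openCube d) :=
  isOpen_set_pi Set.finite_univ fun _ _ => isOpen_Ioo

theorem openCube_subset_cube (d : ℕ) : openCube d ⊆ cube d :=
  Set.pi_mono fun _ _ => Set.Ioo_subset_Ico_self

theorem openCube_ae_eq_cube (d : ℕ) : (openCube d : Set (Fin d → ℝ)) =ᵐ[volume] cube d :=
  (Measure.univ_pi_Ioo_ae_eq_Icc (f := (0 : Fin d → ℝ)) (g := 1)).trans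
    (Measure.univ_pi_Ico_ae_eq_Icc (f := (0 : Fin d → ℝ)) (g := 1)).symm

theorem ae_mem_openCube (d : ℕ) : ∀ᵐ x ∂volume.restrict (cube d), x ∈ openCube d := by
  rw [← Measure.restrict_congr_set (openCube_ae_eq_cube d)]
  exact ae_restrict_mem (isOpen_openCube d).measurableSet

variable {ζ : (Fin d → ℝ) → ℝ}

theorem fractVec_eq_sub_floor (x : Fin d → ℝ) : fractVec x = x - fun i => (⌊x i⌋ : ℝ) := rfl

theorem floor_eq_of_sub_intCast_mem_openCube {x : Fin d → ℝ} {k : Fin d → ℤ}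
    (h : (x - fun i => (k i : ℝ)) ∈ openCube d) : (fun i => ⌊x i⌋) = k := funext fun i =>
  Int.floor_eq_iff.mpr ⟨(sub_pos.mp (h i trivial).1).le, (sub_lt_iff_lt_add'.mp (h i trivial).2)⟩

theorem hasCompactSupport_of_tsupport_subset_openCube (hζ : tsupport ζ ⊆ openCube d) :
    HasCompactSupport ζ :=
  isCompact_Icc.of_isClosed_subset (isClosed_tsupport ζ)
    (hζ.trans ((openCube_subset_cube d).trans (cube_subset_Icc d)))

theorem contDiff_comp_fractVec (hζ : ContDiff ℝ (⊤ : ℕ∞) ζ) (hsupp : tsupport ζ ⊆ openCube d) :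
    ContDiff ℝ (⊤ : ℕ∞) fun x => ζ (fractVec x) := by
  obtain ⟨δ, hδ, hthick⟩ := (hasCompactSupport_of_tsupport_subset_openCube hsupp).isCompact
    |>.exists_thickening_subset_open (isOpen_openCube d) hsupp
  refine contDiff_iff_contDiffAt.mpr fun x => ?_
  have hlocal : (fun z => ζ (fractVec z)) =ᶠ[𝓝 x] fun z => ζ (z - fun i => (⌊x i⌋ : ℝ)) := by
    filter_upwards [Metric.ball_mem_nhds x hδ] with z hz
    by_cases hfloor : (fun i => ⌊z i⌋) = fun i => ⌊x i⌋
    · rw [fractVec_eq_sub_floor]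
      exact congrArg (fun k : Fin d → ℤ => ζ (z - fun i => (k i : ℝ))) hfloor
    have hz_fract : fractVec z ∉ tsupport ζ := fun hmem => hfloor.elim <| Eq.symm <|
      floor_eq_of_sub_intCast_mem_openCube <| hthick <| Metric.mem_thickening_iff.mpr
        ⟨_, hmem, by rwa [fractVec_eq_sub_floor, dist_sub_right, dist_comm]⟩
    have hz_sub : (z - fun i => (⌊x i⌋ : ℝ)) ∉ tsupport ζ := fun hmem =>
      hfloor (floor_eq_of_sub_intCast_mem_openCube (hsupp hmem))
    rw [image_eq_zero_of_notMem_tsupport hz_fract, image_eq_zero_of_notMem_tsupport hz_sub]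
  exact ((hζ.comp (contDiff_id.sub contDiff_const)).contDiffAt).congr_of_eventuallyEq hlocal

theorem ae_eq_zero_of_forall_setIntegral_mul_eq_zero {f : (Fin d → ℝ) → ℝ}
    (hf : IntegrableOn f (cube d))
    (h : ∀ ζ : (Fin d → ℝ) → ℝ, ContDiff ℝ (⊤ : ℕ∞) ζ → tsupport ζ ⊆ openCube d →
      ∫ x in cube d, f x * ζ x = 0) : f =ᵐ[volume.restrict (cube d)] 0 := by
  have hzero := (isOpen_openCube d).ae_eq_zero_of_integral_contDiff_smul_eq_zero
    (hf.mono_set (openCube_subset_cube d)).locallyIntegrableOn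
    fun ζ hζ _ hsupp => by
      have hcube : Function.support (fun x => ζ x • f x) ⊆ cube d :=
        (support_smul_subset_left _ _).trans <|
          (subset_tsupport ζ).trans (hsupp.trans (openCube_subset_cube d))
      rw [← setIntegral_eq_integral_of_forall_compl_eq_zero
        fun x hx => notMem_support.mp fun hx' => hx (hcube hx')]
      simpa only [smul_eq_mul, mul_comm] using h ζ hζ hsupp
  filter_upwards [ae_restrict_of_ae hzero, ae_mem_openCube d] with x hx hxo using hx hxo

end OpenCell

section Morrey

variable {d : ℕ}

section Rescaling

variable {f : (Fin d → ℝ) → ℝ} (hf : Continuous f) (hfp : ZPer f) (hf₀ : ∀ x, 0 ≤ f x)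

include hf hfp hf₀

open scoped Pointwise in
theorem pow_mul_setIntegral_comp_add_smul_le (b : Fin d → ℝ) {s : ℝ} (hs : 0 < s) (hs₁ : s ≤ 1) :
    s ^ d * ∫ z in cube d, f (b + s • z) ≤ ∫ x in cube d, f x := by
  have hscale := Measure.setIntegral_comp_smul_of_pos volume (fun x => f (x + b)) (cube d) hs
  rw [Module.finrank_fin_fun, smul_eq_mul] at hscale
  simp_rw [add_comm b]
  rw [hscale, mul_inv_cancel_left₀ (by positivity), ← hfp.setIntegral_cube_add_right b]
  refine setIntegral_mono_set (integrable_cube_of_continuous (by fun_prop))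
    (Eventually.of_forall fun x => hf₀ _) (LE.le.eventuallyLE ?_)
  rintro _ ⟨x, hx, rfl⟩ i hi
  obtain ⟨h₀, h₁⟩ := hx i hi
  exact ⟨mul_nonneg hs.le h₀, by simp only [Pi.smul_apply, smul_eq_mul]; nlinarith⟩

theorem setIntegral_comp_add_smul_le_rpow {p : ℕ} (hp : p ≠ 0) {α : ℝ}
    (hα : (d : ℝ) ≤ (1 - α) * p) {K : ℝ} (hK : 0 ≤ K) (hfK : ∫ x in cube d, f x ^ p ≤ K ^ p)
    (b : Fin d → ℝ) {s : ℝ} (hs : 0 < s) (hs₁ : s ≤ 1) :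
    ∫ z in cube d, f (b + s • z) ≤ s ^ (α - 1) * K := by
  refine le_of_pow_le_pow_left₀ hp (by positivity) ?_
  have hscale := (pow_mul_setIntegral_comp_add_smul_le (hf.pow p)
    (fun x k => congrArg (· ^ p) (hfp x k)) (fun x => pow_nonneg (hf₀ x) p) b hs hs₁).trans hfK
  have hexp : 1 ≤ (s ^ (α - 1)) ^ p * s ^ d := by
    rw [← Real.rpow_mul_natCast hs.le, ← Real.rpow_natCast s d, ← Real.rpow_add hs]
    exact Real.one_le_rpow_of_pos_of_le_one_of_nonpos hs hs₁ (by linarith)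
  calc (∫ z in cube d, f (b + s • z)) ^ p
      ≤ ∫ z in cube d, f (b + s • z) ^ p := pow_integral_le_integral_pow (fun z => hf₀ _)
        (integrable_cube_of_continuous (by fun_prop)) (integrable_cube_of_continuous (by fun_prop))
    _ ≤ ((s ^ (α - 1)) ^ p * s ^ d) * ∫ z in cube d, f (b + s • z) ^ p :=
      le_mul_of_one_le_left (integral_nonneg fun z => pow_nonneg (hf₀ _) p) hexp
    _ ≤ (s ^ (α - 1)) ^ p * K ^ p := by
      rw [mul_assoc]
      exact mul_le_mul_of_nonneg_left hscale (by positivity)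
    _ = (s ^ (α - 1) * K) ^ p := (mul_pow ..).symm

end Rescaling

variable {u : (Fin d → ℝ) → ℝ}

theorem abs_sub_setIntegral_le_integral_gradNorm (hu : ContDiff ℝ (⊤ : ℕ∞) u) (hup : ZPer u)
    {c x : Fin d → ℝ} {l : ℝ} (hx : ∀ i, x i ∈ Set.Icc (c i) (c i + l)) :
    |u x - ∫ z in cube d, u (c + l • z)| ≤
      l * ∫ t in (0 : ℝ)..1, ∫ z in cube d, gradNorm u (x + t • (c - x) + (t * l) • z) := by
  have hgrad := continuous_gradNorm hu
  have huc := hu.continuous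
  obtain ⟨M, hM⟩ := hup.gradNorm.exists_abs_le hgrad
  have hsegment (z) (hz : z ∈ cube d) : |u x - u (c + l • z)| ≤
      l * ∫ t in Set.Ioc (0 : ℝ) 1, gradNorm u (x + t • (c - x) + (t * l) • z) := by
    have hbound i : |(c + l • z - x) i| ≤ l := by
      obtain ⟨hx₁, hx₂⟩ := hx i
      obtain ⟨hz₁, hz₂⟩ := hz i (Set.mem_univ i)
      simp only [Pi.sub_apply, Pi.add_apply, Pi.smul_apply, smul_eq_mul, abs_le]
      constructor <;> nlinarith
    have h := abs_sub_le_integral_gradNorm hu x (c + l • z - x) hbound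
    rw [add_sub_cancel, abs_sub_comm, intervalIntegral.integral_of_le zero_le_one] at h
    refine h.trans_eq (congrArg (l * ·) <| integral_congr_ae <| Eventually.of_forall fun t => ?_)
    exact congrArg (gradNorm u) (by rw [mul_smul]; simp only [smul_sub, smul_add]; abel)
  have hint : Integrable (fun p : (Fin d → ℝ) × ℝ =>
      gradNorm u (x + p.2 • (c - x) + (p.2 * l) • p.1))
      ((volume.restrict (cube d)).prod (volume.restrict (Set.Ioc (0 : ℝ) 1))) :=
    integrable_of_abs_le (Continuous.measurable (by fun_prop)) fun p => hM _
  calc |u x - ∫ z in cube d, u (c + l • z)|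
      = |∫ z in cube d, (u x - u (c + l • z))| := by
        rw [integral_sub (integrable_const _) (integrable_cube_of_continuous (by fun_prop))]
        simp
    _ ≤ ∫ z in cube d, |u x - u (c + l • z)| := abs_integral_le_integral_abs
    _ ≤ ∫ z in cube d, l * ∫ t in Set.Ioc (0 : ℝ) 1,
          gradNorm u (x + t • (c - x) + (t * l) • z) :=
        setIntegral_mono_on (integrable_cube_of_continuous (by fun_prop))
          (hint.integral_prod_left.const_mul l) (measurableSet_cube d) hsegment
    _ = _ := by
        rw [integral_const_mul, integral_integral_swap hint,
          intervalIntegral.integral_of_le zero_le_one]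

variable (hu : ContDiff ℝ (⊤ : ℕ∞) u) (hup : ZPer u) {p : ℕ} (hp : p ≠ 0) {α : ℝ} (hα₀ : 0 < α)
  (hα : (d : ℝ) ≤ (1 - α) * p) {K : ℝ} (hK : 0 ≤ K) (huK : ∫ x in cube d, gradNorm u x ^ p ≤ K ^ p)

include hu hup hp hα₀ hα hK huK

theorem abs_sub_setIntegral_le_rpow {c x : Fin d → ℝ} {l : ℝ} (hl : 0 < l) (hl₁ : l ≤ 1)
    (hx : ∀ i, x i ∈ Set.Icc (c i) (c i + l)) :
    |u x - ∫ z in cube d, u (c + l • z)| ≤ l ^ α / α * K := by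
  have hgrad := continuous_gradNorm hu
  obtain ⟨M, hM⟩ := hup.gradNorm.exists_abs_le hgrad
  have hint : Integrable (fun q : ℝ × (Fin d → ℝ) =>
      gradNorm u (x + q.1 • (c - x) + (q.1 * l) • q.2))
      ((volume.restrict (Set.Ioc (0 : ℝ) 1)).prod (volume.restrict (cube d))) :=
    integrable_of_abs_le (Continuous.measurable (by fun_prop)) fun q => hM _
  have hrpow : IntervalIntegrable (fun t : ℝ => t ^ (α - 1)) volume 0 1 :=
    intervalIntegral.intervalIntegrable_rpow' (by linarith)
  have haverage (t : ℝ) (ht : t ∈ Set.Ioc (0 : ℝ) 1) :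
      ∫ z in cube d, gradNorm u (x + t • (c - x) + (t * l) • z) ≤
        t ^ (α - 1) * (l ^ (α - 1) * K) := by
    rw [← mul_assoc, ← Real.mul_rpow ht.1.le hl.le]
    exact setIntegral_comp_add_smul_le_rpow hgrad hup.gradNorm (gradNorm_nonneg u) hp hα hK huK
      _ (mul_pos ht.1 hl) (mul_le_one₀ ht.2 hl.le hl₁)
  calc |u x - ∫ z in cube d, u (c + l • z)|
      ≤ l * ∫ t in (0 : ℝ)..1, ∫ z in cube d, gradNorm u (x + t • (c - x) + (t * l) • z) :=
        abs_sub_setIntegral_le_integral_gradNorm hu hup hx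
    _ ≤ l * ∫ t in (0 : ℝ)..1, t ^ (α - 1) * (l ^ (α - 1) * K) := by
        rw [intervalIntegral.integral_of_le zero_le_one,
          intervalIntegral.integral_of_le zero_le_one]
        exact mul_le_mul_of_nonneg_left (setIntegral_mono_on hint.integral_prod_left
          (hrpow.1.mul_const _) measurableSet_Ioc haverage) hl.le
    _ = l ^ α / α * K := by
        rw [intervalIntegral.integral_mul_const, integral_rpow (Or.inl (by linarith)),
          Real.rpow_sub_one hl.ne']
        simp only [sub_add_cancel, Real.one_rpow, Real.zero_rpow hα₀.ne']
        field_simp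
        ring

theorem abs_sub_le_rpow_dist_of_dist_le_one {x y : Fin d → ℝ} (hxy : dist x y ≤ 1) :
    |u x - u y| ≤ 2 / α * K * dist x y ^ α := by
  rcases eq_or_ne x y with rfl | hne
  · simp [Real.zero_rpow hα₀.ne']
  have hcoord i : |x i - y i| ≤ dist x y := by
    rw [← Real.dist_eq]
    exact dist_le_pi_dist x y i
  have hmean (w : Fin d → ℝ) (hw : ∀ i, w i ∈ Set.Icc ((x ⊓ y) i) ((x ⊓ y) i + dist x y)) :=
    abs_sub_setIntegral_le_rpow hu hup hp hα₀ hα hK huK (dist_pos.mpr hne) hxy hw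
  have hx := hmean x fun i => ⟨min_le_left _ _, by
    rw [Pi.inf_apply]; grind [abs_le.mp (hcoord i)]⟩
  have hy := hmean y fun i => ⟨min_le_right _ _, by
    rw [Pi.inf_apply]; grind [abs_le.mp (hcoord i)]⟩
  rw [abs_sub_comm] at hy
  calc |u x - u y| ≤ _ := abs_sub_le _ _ _
    _ ≤ dist x y ^ α / α * K + dist x y ^ α / α * K := add_le_add hx hy
    _ = 2 / α * K * dist x y ^ α := by ring

theorem abs_sub_le_of_integral_gradNorm_pow_le (x y : Fin d → ℝ) : |u x - u y| ≤ 2 / α * K := by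
  have hdist : dist (fractVec x) (fractVec y) ≤ 1 := by
    refine (dist_pi_le_iff zero_le_one).mpr fun i => ?_
    obtain ⟨hx₀, hx₁⟩ := fractVec_mem_cube x i (Set.mem_univ i)
    obtain ⟨hy₀, hy₁⟩ := fractVec_mem_cube y i (Set.mem_univ i)
    rw [Real.dist_eq, abs_le]
    constructor <;> linarith
  rw [← hup.apply_fractVec x, ← hup.apply_fractVec y]
  exact (abs_sub_le_rpow_dist_of_dist_le_one hu hup hp hα₀ hα hK huK hdist).trans <|
    mul_le_of_le_one_right (by positivity) (Real.rpow_le_one dist_nonneg hdist hα₀.le)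

theorem abs_sub_le_rpow_dist (x y : Fin d → ℝ) : |u x - u y| ≤ 2 / α * K * dist x y ^ α := by
  rcases le_total (dist x y) 1 with h | h
  · exact abs_sub_le_rpow_dist_of_dist_le_one hu hup hp hα₀ hα hK huK h
  · exact (abs_sub_le_of_integral_gradNorm_pow_le hu hup hp hα₀ hα hK huK x y).trans <|
      le_mul_of_one_le_right (by positivity) (Real.one_le_rpow h hα₀.le)

end Morrey

section Compactness

variable {d : ℕ} {u : ℕ → (Fin d → ℝ) → ℝ} {u₀ : (Fin d → ℝ) → ℝ}

theorem zPer_of_tendsto (hup : ∀ n, ZPer (u n))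
    (h : ∀ x, Tendsto (fun n => u n x) atTop (𝓝 (u₀ x))) : ZPer u₀ := fun x k =>
  tendsto_nhds_unique ((h _).congr fun n => hup n x k) (h x)

theorem exists_subseq_tendstoUniformly (hup : ∀ n, ZPer (u n)) (hu : Equicontinuous u) {C : ℝ}
    (hC : ∀ n x, |u n x| ≤ C) :
    ∃ φ : ℕ → ℕ, StrictMono φ ∧ ∃ u₀, TendstoUniformly (fun n => u (φ n)) u₀ atTop := by
  let X := Set.Icc (0 : Fin d → ℝ) 1
  have : CompactSpace X := isCompact_iff_compactSpace.mp isCompact_Icc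
  let f n : BoundedContinuousFunction X ℝ := BoundedContinuousFunction.mkOfCompact
    ⟨fun x => u n x, (hu.continuous n).comp continuous_subtype_val⟩
  have hcompact : IsCompact (closure (Set.range f)) := by
    refine BoundedContinuousFunction.arzela_ascoli (Set.Icc (-C) C) isCompact_Icc _ ?_ ?_
    · rintro _ x ⟨n, rfl⟩
      exact abs_le.mp (hC n x)
    · intro x U hU
      filter_upwards [continuous_subtype_val.continuousAt.eventually (hu x U hU)]
      rintro y hy ⟨_, n, rfl⟩
      exact hy n
  obtain ⟨g, -, φ, hφ, hlim⟩ := hcompact.tendsto_subseq (x := f)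
    fun n => subset_closure (Set.mem_range_self n)
  have hX x : fractVec x ∈ X := cube_subset_Icc d (fractVec_mem_cube x)
  refine ⟨φ, hφ, fun x => g ⟨fractVec x, hX x⟩, ?_⟩
  have hunif := (BoundedContinuousFunction.tendsto_iff_tendstoUniformly.mp hlim).comp
    fun x => (⟨fractVec x, hX x⟩ : X)
  have hu_eq n : u (φ n) = f (φ n) ∘ fun x => ⟨fractVec x, hX x⟩ :=
    funext fun x => ((hup (φ n)).apply_fractVec x).symm
  simp only [hu_eq]
  exact hunif

theorem equicontinuous_of_abs_sub_le_rpow_dist {α C : ℝ} (hα : 0 < α)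
    (h : ∀ n x y, |u n x - u n y| ≤ C * dist x y ^ α) : Equicontinuous u := by
  refine Metric.equicontinuous_of_continuity_modulus (fun t => C * t ^ α) ?_ u fun x y n => h n x y
  have hcont : Continuous fun t : ℝ => C * t ^ α :=
    continuous_const.mul (Real.continuous_rpow_const hα.le)
  simpa [Real.zero_rpow hα.ne'] using hcont.tendsto 0

theorem tendsto_iSup_abs_sub (h : TendstoUniformly u u₀ atTop) :
    Tendsto (fun n => ⨆ x, |u n x - u₀ x|) atTop (𝓝 0) := by
  rw [Metric.tendsto_nhds]
  intro δ hδ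
  filter_upwards [Metric.tendstoUniformly_iff.mp h (δ / 2) (half_pos hδ)] with n hn
  rw [dist_zero_right, Real.norm_of_nonneg (Real.iSup_nonneg fun x => abs_nonneg _)]
  refine (ciSup_le fun x => ?_).trans_lt (half_lt_self hδ)
  rw [abs_sub_comm]
  exact (hn x).le

end Compactness

section Unfolding

variable {d : ℕ}

/-- The map of the periodic unfolding method: the function `w ∘ unfoldMap ε` separates the slow
variable `x` from the fast variable `y = x / ε`. Here the cell of size `ε` is the one with corner
`x`, so that `1 / ε` need not be an integer. -/
def unfoldMap (ε : ℝ) (p : (Fin d → ℝ) × (Fin d → ℝ)) : Fin d → ℝ :=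
  fractVec (p.1 + ε • fractVec (p.2 - ε⁻¹ • p.1))

theorem measurePreserving_unfoldMap (ε : ℝ) :
    MeasurePreserving (unfoldMap ε) (cellMeasure d) (volume.restrict (cube d)) := by
  have hsnd := measurePreserving_shear_snd (h := fun x : Fin d → ℝ => -(ε⁻¹ • x)) (by fun_prop)
  have hfst := measurePreserving_shear_fst (h := fun z : Fin d → ℝ => ε • z) (by fun_prop)
  simp only [← sub_eq_add_neg] at hsnd
  exact measurePreserving_fst.comp (hfst.comp hsnd)

theorem unfoldMap_fractVec_add {ε : ℝ} (x : Fin d → ℝ) {z : Fin d → ℝ} (hz : z ∈ cube d) :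
    unfoldMap ε (x, fractVec (ε⁻¹ • x + z)) = fractVec (x + ε • z) := by
  have hcell : fractVec (fractVec (ε⁻¹ • x + z) - ε⁻¹ • x) = z := by
    have := fractVec_add_intCast z fun i => -⌊(ε⁻¹ • x + z) i⌋
    rw [fractVec_of_mem_cube hz] at this
    rw [fractVec_eq_sub_floor (ε⁻¹ • x + z)]
    refine Eq.trans (congrArg fractVec (funext fun i => ?_)) this
    simp only [Pi.sub_apply, Pi.add_apply, Int.cast_neg]
    ring
  rw [unfoldMap, hcell]

variable {w : (Fin d → ℝ) → ℝ}

theorem integral_comp_unfoldMap_mul (ε : ℝ) (hw : Measurable w) (hwp : ZPer w)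
    {ψ : (Fin d → ℝ) → (Fin d → ℝ) → ℝ} (hψ : Measurable (uncurry ψ)) (hψp : ∀ x, ZPer (ψ x)) :
    ∫ p, w (unfoldMap ε p) * ψ p.1 p.2 ∂cellMeasure d =
      ∫ p, w (p.1 + ε • p.2) * ψ p.1 (ε⁻¹ • p.1 + p.2) ∂cellMeasure d := by
  have hshear := measurePreserving_shear_snd (h := fun x : Fin d → ℝ => ε⁻¹ • x) (by fun_prop)
  have hmeas : Measurable fun p : (Fin d → ℝ) × (Fin d → ℝ) => w (unfoldMap ε p) * ψ p.1 p.2 :=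
    (hw.comp (measurePreserving_unfoldMap ε).measurable).mul hψ
  rw [← integral_comp_measurePreserving hshear hmeas]
  refine integral_congr_ae ?_
  filter_upwards [ae_cellMeasure_mem d] with p hp
  rw [add_comm p.2, unfoldMap_fractVec_add _ hp.2, hwp.apply_fractVec, (hψp _).apply_fractVec]

theorem integral_comp_add_smul_mul (a : ℝ) (hw : Measurable w) (hwp : ZPer w)
    {K : (Fin d → ℝ) → (Fin d → ℝ) → ℝ} (hK : Measurable (uncurry K)) :
    ∫ p, w (p.1 + a • p.2) * K p.1 p.2 ∂cellMeasure d =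
      ∫ p, w p.1 * K (fractVec (p.1 - a • p.2)) p.2 ∂cellMeasure d := by
  have hshear := measurePreserving_shear_fst (h := fun z : Fin d → ℝ => -(a • z)) (by fun_prop)
  have hmeas : Measurable fun p : (Fin d → ℝ) × (Fin d → ℝ) => w (p.1 + a • p.2) * K p.1 p.2 :=
    Measurable.mul (by fun_prop) hK
  rw [← integral_comp_measurePreserving hshear hmeas]
  refine integral_congr_ae (Eventually.of_forall fun p => ?_)
  have hwz := (hwp.comp_add_right (a • p.2)).apply_fractVec (p.1 - a • p.2)
  rw [sub_add_cancel] at hwz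
  simp only [← sub_eq_add_neg, hwz]

theorem integral_cellMeasure_fst {f : (Fin d → ℝ) → ℝ} :
    ∫ p, f p.1 ∂cellMeasure d = ∫ x in cube d, f x := by
  simpa using integral_fun_fst (μ := volume.restrict (cube d)) (ν := volume.restrict (cube d)) f

section Limit

variable {ε : ℕ → ℝ} {ψ : (Fin d → ℝ) → (Fin d → ℝ) → ℝ} {M : ℝ}

theorem tendsto_apply_sub_apply (hψ : Continuous (uncurry ψ)) (hψp : ∀ x, ZPer (ψ x))
    {x : ℕ → Fin d → ℝ} {x₀ : Fin d → ℝ} (hx : Tendsto x atTop (𝓝 x₀)) (y : ℕ → Fin d → ℝ) :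
    Tendsto (fun n => ψ (x n) (y n) - ψ x₀ (y n)) atTop (𝓝 0) := by
  rw [Metric.tendsto_nhds]
  intro δ hδ
  obtain ⟨v, hv, hvδ⟩ := isCompact_Icc.mem_uniformity_of_prod (k := Set.Icc (0 : Fin d → ℝ) 1)
    (s := Set.univ) hψ.continuousOn (Set.mem_univ x₀) (Metric.dist_mem_uniformity hδ)
  filter_upwards [hx (nhdsWithin_univ x₀ ▸ hv)] with n hn
  have := hvδ _ hn _ (cube_subset_Icc d (fractVec_mem_cube (y n)))
  rwa [dist_zero_right, Real.norm_eq_abs, ← Real.dist_eq, ← (hψp _).apply_fractVec,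
    ← (hψp x₀).apply_fractVec]

theorem tendsto_apply_fractVec_sub (hε : ∀ n, ε n ≠ 0) (hε₀ : Tendsto ε atTop (𝓝 0))
    (hψ : Continuous (uncurry ψ)) (hψp : ∀ x, ZPer (ψ x)) (σ s : ℝ) {x : Fin d → ℝ}
    (hx : x ∈ openCube d) (z : Fin d → ℝ) :
    Tendsto (fun n => ψ (fractVec (x - (σ * ε n) • z))
        ((ε n)⁻¹ • fractVec (x - (σ * ε n) • z) + s • z) -
      ψ x ((ε n)⁻¹ • x + (s - σ) • z)) atTop (𝓝 0) := by
  have hlim : Tendsto (fun n => x - (σ * ε n) • z) atTop (𝓝 x) := by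
    simpa using ((hε₀.const_mul σ).smul_const z).const_sub x
  refine (tendsto_apply_sub_apply hψ hψp hlim fun n => (ε n)⁻¹ • x + (s - σ) • z).congr' ?_
  filter_upwards [hlim.eventually ((isOpen_openCube d).mem_nhds hx)] with n hn
  have hfast : (ε n)⁻¹ • (x - (σ * ε n) • z) + s • z = (ε n)⁻¹ • x + (s - σ) • z := by
    rw [smul_sub, smul_smul, mul_left_comm, inv_mul_cancel₀ (hε n), mul_one, sub_smul]
    abel
  rw [fractVec_of_mem_cube (openCube_subset_cube d hn), hfast]

/-- For `σ = s = 1` this compares `w ∘ unfoldMap ε` with `w`; for `σ = -1`, `s = 0` it computes the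
limit of the averages of `w` over cells of size `ε`. -/
theorem tendsto_integral_shear_sub (hε : ∀ n, ε n ≠ 0) (hε₀ : Tendsto ε atTop (𝓝 0))
    {w : ℕ → (Fin d → ℝ) → ℝ} (hw : ∀ n, Continuous (w n)) (hwp : ∀ n, ZPer (w n))
    (hUI : UniformIntegrable w 1 (volume.restrict (cube d))) (hψ : Continuous (uncurry ψ))
    (hψp : ∀ x, ZPer (ψ x)) (hM : ∀ x y, |ψ x y| ≤ M) (σ s : ℝ) :
    Tendsto (fun n =>
      ∫ p, w n (p.1 + (σ * ε n) • p.2) * ψ p.1 ((ε n)⁻¹ • p.1 + s • p.2) ∂cellMeasure d -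
      ∫ p, w n p.1 * ψ p.1 ((ε n)⁻¹ • p.1 + (s - σ) • p.2) ∂cellMeasure d) atTop (𝓝 0) := by
  have hψm := hψ.measurable
  let shift n (p : (Fin d → ℝ) × (Fin d → ℝ)) : Fin d → ℝ := fractVec (p.1 - (σ * ε n) • p.2)
  let R n (p : (Fin d → ℝ) × (Fin d → ℝ)) : ℝ :=
    ψ (shift n p) ((ε n)⁻¹ • shift n p + s • p.2) - ψ p.1 ((ε n)⁻¹ • p.1 + (s - σ) • p.2)
  have hint n {a b : (Fin d → ℝ) × (Fin d → ℝ) → Fin d → ℝ} (ha : Measurable a)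
      (hb : Measurable b) : Integrable (fun p => w n p.1 * ψ (a p) (b p)) (cellMeasure d) :=
    integrable_mul_of_abs_le ((integrable_cube_of_continuous (hw n)).comp_fst _)
      (hψm.comp (ha.prodMk hb)) fun p => hM _ _
  have hR n : ∫ p, w n p.1 * R n p ∂cellMeasure d =
      ∫ p, w n (p.1 + (σ * ε n) • p.2) * ψ p.1 ((ε n)⁻¹ • p.1 + s • p.2) ∂cellMeasure d -
      ∫ p, w n p.1 * ψ p.1 ((ε n)⁻¹ • p.1 + (s - σ) • p.2) ∂cellMeasure d := by
    rw [integral_comp_add_smul_mul (σ * ε n) (hw n).measurable (hwp n)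
      (K := fun x z => ψ x ((ε n)⁻¹ • x + s • z)) (by unfold uncurry; fun_prop),
      ← integral_sub (hint n (by fun_prop) (by fun_prop)) (hint n (by fun_prop) (by fun_prop))]
    simp only [R, shift, mul_sub]
  simp only [← hR]
  refine tendsto_integral_mul_of_uniformIntegrable (M := 2 * M)
    (uniformIntegrable_comp_measurePreserving hUI fun _ => measurePreserving_fst)
    (fun n => by fun_prop) (fun n p => ?_) ?_
  · linarith [abs_sub (ψ (shift n p) ((ε n)⁻¹ • shift n p + s • p.2))
      (ψ p.1 ((ε n)⁻¹ • p.1 + (s - σ) • p.2)), hM (shift n p) ((ε n)⁻¹ • shift n p + s • p.2),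
      hM p.1 ((ε n)⁻¹ • p.1 + (s - σ) • p.2)]
  exact (Measure.quasiMeasurePreserving_fst.ae (ae_mem_openCube d)).mono fun p hp =>
    tendsto_apply_fractVec_sub hε hε₀ hψ hψp σ s hp p.2

end Limit

end Unfolding

section TwoScale

variable {d : ℕ} {ψ : (Fin d → ℝ) → (Fin d → ℝ) → ℝ}

theorem TestFn.exists_abs_le (hψ : TestFn ψ) : ∃ M, ∀ x y, |ψ x y| ≤ M := by
  obtain ⟨M, hM⟩ := isCompact_Icc.exists_bound_of_continuousOn
    (s := Set.Icc (0 : (Fin d → ℝ) × (Fin d → ℝ)) 1) hψ.1.continuous.continuousOn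
  refine ⟨M, fun x y => ?_⟩
  rw [← (hψ.2.1 y).apply_fractVec, ← (hψ.2.2 _).apply_fractVec]
  have hx := cube_subset_Icc d (fractVec_mem_cube x)
  have hy := cube_subset_Icc d (fractVec_mem_cube y)
  exact hM (fractVec x, fractVec y) ⟨⟨hx.1, hy.1⟩, hx.2, hy.2⟩

theorem TestFn.setIntegral_mul_eq (hψ : TestFn ψ) {F : (Fin d → ℝ) × (Fin d → ℝ) → ℝ}
    (hF : Integrable F (cellMeasure d)) :
    ∫ x in cube d, ∫ y in cube d, F (x, y) * ψ x y = ∫ p, F p * ψ p.1 p.2 ∂cellMeasure d := by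
  obtain ⟨M, hM⟩ := hψ.exists_abs_le
  exact (integral_prod _ (integrable_mul_of_abs_le hF hψ.1.continuous.measurable
    fun p => hM p.1 p.2)).symm

variable {ε : ℕ → ℝ}

theorem TwoScaleW.comp_strictMono {w : ℕ → (Fin d → ℝ) → ℝ} {W : (Fin d → ℝ) → (Fin d → ℝ) → ℝ}
    (h : TwoScaleW ε w W) {φ : ℕ → ℕ} (hφ : StrictMono φ) :
    TwoScaleW (fun n => ε (φ n)) (fun n => w (φ n)) W :=
  fun ψ hψ => (h ψ hψ).comp hφ.tendsto_atTop

theorem twoScaleW_of_weakConv_comp_unfoldMap (hε : ∀ n, ε n ≠ 0) (hε₀ : Tendsto ε atTop (𝓝 0))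
    {w : ℕ → (Fin d → ℝ) → ℝ} (hw : ∀ n, Continuous (w n)) (hwp : ∀ n, ZPer (w n))
    (hUI : UniformIntegrable w 1 (volume.restrict (cube d)))
    {F : (Fin d → ℝ) × (Fin d → ℝ) → ℝ} (hF : Integrable F (cellMeasure d))
    (h : WeakConv (cellMeasure d) (fun n => w n ∘ unfoldMap (ε n)) F) :
    TwoScaleW ε w (curry F) := fun ψ hψ => by
  obtain ⟨M, hM⟩ := hψ.exists_abs_le
  have hunfold := h (uncurry ψ) hψ.1.continuous.measurable ⟨M, fun p => hM p.1 p.2⟩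
  have hdiff := tendsto_integral_shear_sub hε hε₀ hw hwp hUI hψ.1.continuous hψ.2.2 hM 1 1
  simp only [one_mul, one_smul, sub_self, zero_smul, add_zero] at hdiff
  have hlim := hunfold.sub hdiff
  simp only [comp_apply, uncurry, integral_comp_unfoldMap_mul _ (hw _).measurable (hwp _)
    hψ.1.continuous.measurable hψ.2.2, sub_sub_cancel, sub_zero] at hlim
  rw [← hψ.setIntegral_mul_eq hF] at hlim
  refine hlim.congr fun n => ?_
  exact integral_cellMeasure_fst (f := fun x => w n x * ψ x ((ε n)⁻¹ • x))

theorem TwoScaleW.tendsto_setIntegral_mul {w : ℕ → (Fin d → ℝ) → ℝ}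
    {W : (Fin d → ℝ) → (Fin d → ℝ) → ℝ} (h : TwoScaleW ε w W) {ζ η : (Fin d → ℝ) → ℝ}
    (hζ : ContDiff ℝ (⊤ : ℕ∞) ζ) (hsupp : tsupport ζ ⊆ openCube d)
    (hη : ContDiff ℝ (⊤ : ℕ∞) η) (hηp : ZPer η) :
    Tendsto (fun n => ∫ x in cube d, w n x * (ζ x * η ((ε n)⁻¹ • x))) atTop
      (𝓝 (∫ x in cube d, ∫ y in cube d, W x y * (ζ x * η y))) := by
  have hψ : TestFn fun x y => ζ (fractVec x) * η y :=
    ⟨((contDiff_comp_fractVec hζ hsupp).comp contDiff_fst).mul (hη.comp contDiff_snd),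
      fun y => zPer_comp_fractVec fun x => ζ x * η y,
      fun x y k => congrArg (ζ (fractVec x) * ·) (hηp y k)⟩
  have htest n : ∫ x in cube d, w n x * (ζ (fractVec x) * η ((ε n)⁻¹ • x)) =
      ∫ x in cube d, w n x * (ζ x * η ((ε n)⁻¹ • x)) :=
    setIntegral_cube_fractVec fun x' x => w n x * (ζ x' * η ((ε n)⁻¹ • x))
  have hlim := h _ hψ
  simp only [htest, setIntegral_cube_fractVec fun x' x => ∫ y in cube d, W x y * (ζ x' * η y)]
    at hlim
  exact hlim

theorem TwoScaleW.ae_eq_setIntegral {w : ℕ → (Fin d → ℝ) → ℝ}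
    {F : (Fin d → ℝ) × (Fin d → ℝ) → ℝ} (h : TwoScaleW ε w (curry F))
    (hF : Integrable F (cellMeasure d)) {f : (Fin d → ℝ) → ℝ}
    (hf : IntegrableOn f (cube d)) (hwf : WeakConvCube w f) :
    f =ᵐ[volume.restrict (cube d)] fun x => ∫ y in cube d, F (x, y) := by
  suffices (fun x => f x - ∫ y in cube d, F (x, y)) =ᵐ[volume.restrict (cube d)] 0 from
    this.mono fun x hx => sub_eq_zero.mp hx
  have hF₁ : IntegrableOn (fun x => ∫ y in cube d, F (x, y)) (cube d) := hF.integral_prod_left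
  refine ae_eq_zero_of_forall_setIntegral_mul_eq_zero (hf.sub hF₁) fun ζ hζ hsupp => ?_
  obtain ⟨M, hM⟩ := (hasCompactSupport_of_tsupport_subset_openCube hsupp)
    |>.exists_bound_of_continuous hζ.continuous
  have htwo := h.tendsto_setIntegral_mul hζ hsupp (contDiff_const (c := (1 : ℝ))) fun _ _ => rfl
  have hweak := hwf ζ hζ.continuous.measurable ⟨M, hM⟩
  simp only [mul_one, Function.curry_apply, integral_mul_const] at htwo
  have heq := tendsto_nhds_unique hweak htwo
  have hint {g : (Fin d → ℝ) → ℝ} (hg : IntegrableOn g (cube d)) :=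
    integrable_mul_of_abs_le hg hζ.continuous.measurable hM
  rw [← sub_eq_zero, ← integral_sub (hint hf) (hint hF₁)] at heq
  simpa only [Pi.sub_apply, sub_mul] using heq

/-- The unfolded sequences are retained in the conclusion because they carry convex integrals to
the two-scale limit. -/
theorem exists_subseq_twoScaleW {ι : Type*} [Countable ι] (hε : ∀ n, ε n ≠ 0)
    (hε₀ : Tendsto ε atTop (𝓝 0)) {w : ι → ℕ → (Fin d → ℝ) → ℝ}
    (hw : ∀ i n, Continuous (w i n)) (hwp : ∀ i n, ZPer (w i n))
    (hUI : ∀ i, UniformIntegrable (w i) 1 (volume.restrict (cube d))) :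
    ∃ φ : ℕ → ℕ, StrictMono φ ∧ ∃ W : ι → (Fin d → ℝ) × (Fin d → ℝ) → ℝ,
      (∀ i x, ZPer fun y => W i (x, y)) ∧ (∀ i, Integrable (W i) (cellMeasure d)) ∧
      (∀ i, WeakConv (cellMeasure d) (fun n => w i (φ n) ∘ unfoldMap (ε (φ n))) (W i)) ∧
      (∀ i, TwoScaleW (fun n => ε (φ n)) (fun n => w i (φ n)) (curry (W i))) ∧
      ∀ i, WeakConvCube (fun n => w i (φ n)) fun x => ∫ y in cube d, W i (x, y) := by
  obtain ⟨φ₁, hφ₁, F, hF, hFlim⟩ := exists_subseq_weakConv_of_uniformIntegrable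
    (fun i n => w i n ∘ unfoldMap (ε n)) fun i => uniformIntegrable_comp_measurePreserving (hUI i)
      fun n => measurePreserving_unfoldMap (ε n)
  obtain ⟨φ₂, hφ₂, f, hf, hweak⟩ := exists_subseq_weakConv_of_uniformIntegrable
    (fun i n => w i (φ₁ n)) fun i => uniformIntegrable_comp_index (hUI i) φ₁
  let W i (p : (Fin d → ℝ) × (Fin d → ℝ)) : ℝ := F i (p.1, fractVec p.2)
  have hFW i : F i =ᵐ[cellMeasure d] W i := by
    filter_upwards [ae_cellMeasure_mem d] with p hp
    simp only [W, fractVec_of_mem_cube hp.2]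
  have hW i : Integrable (W i) (cellMeasure d) := (hF i).congr (hFW i)
  have hunfold i := (hFlim i).congr_ae (hFW i)
  have htwo i := (twoScaleW_of_weakConv_comp_unfoldMap (fun n => hε _)
    (hε₀.comp hφ₁.tendsto_atTop) (fun n => hw i _) (fun n => hwp i _)
    (uniformIntegrable_comp_index (hUI i) φ₁) (hW i) (hunfold i)).comp_strictMono hφ₂
  exact ⟨φ₁ ∘ φ₂, hφ₁.comp hφ₂, W, fun i x => zPer_comp_fractVec fun y => F i (x, y), hW,
    fun i => (hunfold i).comp_strictMono hφ₂, htwo,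
    fun i => (hweak i).congr_ae ((htwo i).ae_eq_setIntegral (hW i) (hf i) (hweak i))⟩

end TwoScale

section Corrector

variable {d : ℕ} {ε : ℝ} {u w : (Fin d → ℝ) → ℝ}

/-- The average of `w` over the cell of size `ε` with upper corner `x`. -/
def cellAverage (ε : ℝ) (w : (Fin d → ℝ) → ℝ) (x : Fin d → ℝ) : ℝ := ∫ z in cube d, w (x - ε • z)

/-- The oscillation of `u` at scale `ε`, rescaled so as to be bounded by the gradient: its
two-scale limit is the first corrector `u₁`. -/
def corrector (ε : ℝ) (u : (Fin d → ℝ) → ℝ) (x : Fin d → ℝ) : ℝ := ε⁻¹ * (u x - cellAverage ε u x)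

theorem continuous_cellAverage (ε : ℝ) (hw : Continuous w) (hwp : ZPer w) :
    Continuous (cellAverage ε w) := by
  obtain ⟨M, hM⟩ := hwp.exists_abs_le hw
  exact continuous_of_dominated (fun x => Continuous.aestronglyMeasurable (by fun_prop))
    (fun x => Eventually.of_forall fun z => hM _) (integrable_const M)
    (Eventually.of_forall fun z => by fun_prop)

theorem ZPer.cellAverage (ε : ℝ) (hw : ZPer w) : ZPer (cellAverage ε w) := fun x k => by
  simp only [_root_.cellAverage, sub_eq_add_neg]
  exact integral_congr_ae (Eventually.of_forall fun z => hw.comp_add_right _ x k)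

theorem continuous_corrector (ε : ℝ) (hu : Continuous u) (hup : ZPer u) :
    Continuous (corrector ε u) :=
  continuous_const.mul (hu.sub (continuous_cellAverage ε hu hup))

theorem ZPer.corrector (ε : ℝ) (hu : ZPer u) : ZPer (corrector ε u) := fun x k => by
  simp only [_root_.corrector, hu x k, hu.cellAverage ε x k]

theorem setIntegral_cellAverage_mul (ε : ℝ) (hw : Continuous w) (hwp : ZPer w)
    {K : (Fin d → ℝ) → ℝ} (hK : IntegrableOn K (cube d)) :
    ∫ x in cube d, cellAverage ε w x * K x =
      ∫ p, w (p.1 - ε • p.2) * K p.1 ∂cellMeasure d := by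
  obtain ⟨M, hM⟩ := hwp.exists_abs_le hw
  have hint : Integrable (fun p : (Fin d → ℝ) × (Fin d → ℝ) => w (p.1 - ε • p.2) * K p.1)
      (cellMeasure d) := by
    simp only [mul_comm (w _)]
    exact integrable_mul_of_abs_le (hK.comp_fst _) (Continuous.measurable (by fun_prop))
      fun p => hM _
  simp only [integral_prod _ hint, cellAverage, integral_mul_const]

section PowerBound

/-- The law of a point `s z` of the star-shaped cell, for `z` uniform in the cell and `s` in
`[0, 1]`. -/
abbrev rayMeasure (d : ℕ) : Measure ((Fin d → ℝ) × ℝ) :=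
  (volume.restrict (cube d)).prod (volume.restrict (Set.Ioc (0 : ℝ) 1))

theorem abs_corrector_le (hε : ε ≠ 0) (hu : ContDiff ℝ (⊤ : ℕ∞) u) (hup : ZPer u)
    (x : Fin d → ℝ) :
    |corrector ε u x| ≤ ∫ p, gradNorm u (x + p.2 • -(ε • p.1)) ∂rayMeasure d := by
  have huc := hu.continuous
  have hgrad := continuous_gradNorm hu
  obtain ⟨M, hM⟩ := hup.gradNorm.exists_abs_le hgrad
  have hint : Integrable (fun p : (Fin d → ℝ) × ℝ => gradNorm u (x + p.2 • -(ε • p.1)))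
      (rayMeasure d) :=
    integrable_of_abs_le (Continuous.measurable (by fun_prop)) fun p => hM _
  have hmean : u x - cellAverage ε u x = ∫ z in cube d, (u x - u (x - ε • z)) := by
    rw [integral_sub (integrable_const _) (integrable_cube_of_continuous (by fun_prop))]
    simp [cellAverage]
  rw [corrector, abs_mul, abs_inv, inv_mul_le_iff₀ (abs_pos.mpr hε), hmean, integral_prod _ hint,
    ← integral_const_mul]
  refine abs_integral_le_integral_abs.trans <|
    setIntegral_mono_on (integrable_cube_of_continuous (by fun_prop))
      (hint.integral_prod_left.const_mul _) (measurableSet_cube d) fun z hz => ?_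
  have hcell (i) : |(-(ε • z)) i| ≤ |ε| := by
    have hzi := (cube_subset_Icc d hz)
    rw [Pi.neg_apply, abs_neg, Pi.smul_apply, smul_eq_mul, abs_mul, abs_of_nonneg (hzi.1 i)]
    exact mul_le_of_le_one_right (abs_nonneg ε) (hzi.2 i)
  rw [abs_sub_comm, sub_eq_add_neg x, ← intervalIntegral.integral_of_le zero_le_one]
  exact abs_sub_le_integral_gradNorm hu x _ hcell

theorem setIntegral_abs_corrector_pow_le (hε : ε ≠ 0) (hu : ContDiff ℝ (⊤ : ℕ∞) u) (hup : ZPer u)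
    (r : ℕ) : ∫ x in cube d, |corrector ε u x| ^ r ≤ ∫ x in cube d, gradNorm u x ^ r := by
  have hgrad := continuous_gradNorm hu
  have hcorr := continuous_corrector ε hu.continuous hup
  have hpow : ZPer fun x => gradNorm u x ^ r :=
    fun x k => congrArg (· ^ r) (hup.gradNorm x k)
  obtain ⟨M, hM⟩ := hup.gradNorm.exists_abs_le hgrad
  obtain ⟨Mr, hMr⟩ := hpow.exists_abs_le (by fun_prop)
  have : IsProbabilityMeasure (volume.restrict (Set.Ioc (0 : ℝ) 1)) := ⟨by simp⟩
  have hjensen (x) : |corrector ε u x| ^ r ≤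
      ∫ p, gradNorm u (x + p.2 • -(ε • p.1)) ^ r ∂rayMeasure d :=
    (pow_le_pow_left₀ (abs_nonneg _) (abs_corrector_le hε hu hup x) r).trans <|
      (convexOn_pow (𝕜 := ℝ) r).map_integral_le (continuous_pow r).continuousOn isClosed_Ici
        (Eventually.of_forall fun p => gradNorm_nonneg u _)
        (integrable_of_abs_le (Continuous.measurable (by fun_prop)) fun p => hM _)
        (integrable_of_abs_le (Continuous.measurable (by unfold comp; fun_prop)) fun p => hMr _)
  have hint : Integrable (uncurry fun (x : Fin d → ℝ) (p : (Fin d → ℝ) × ℝ) =>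
      gradNorm u (x + p.2 • -(ε • p.1)) ^ r) ((volume.restrict (cube d)).prod (rayMeasure d)) :=
    integrable_of_abs_le (Continuous.measurable (by unfold uncurry; fun_prop)) fun p => hMr _
  calc ∫ x in cube d, |corrector ε u x| ^ r
      ≤ ∫ x in cube d, ∫ p, gradNorm u (x + p.2 • -(ε • p.1)) ^ r ∂rayMeasure d :=
        integral_mono (integrable_cube_of_continuous (by fun_prop)) hint.integral_prod_left hjensen
    _ = ∫ p, (∫ x in cube d, gradNorm u (x + p.2 • -(ε • p.1)) ^ r) ∂rayMeasure d :=
        integral_integral_swap hint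
    _ = ∫ x in cube d, gradNorm u x ^ r := by
        simp only [hpow.setIntegral_cube_add_right, integral_const, probReal_univ, one_smul]

end PowerBound

section IntegrationByParts

variable {F : (Fin d → ℝ) → ℝ} (i : Fin d)

theorem pder_comp_fractVec {x : Fin d → ℝ} (hx : x ∈ openCube d) :
    pder i (fun z => F (fractVec z)) x = pder i F x := by
  have hlocal : (fun z => F (fractVec z)) =ᶠ[𝓝 x] F := by
    filter_upwards [(isOpen_openCube d).mem_nhds hx] with z hz
    rw [fractVec_of_mem_cube (openCube_subset_cube d hz)]
  rw [pder, pder, hlocal.fderiv_eq]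

theorem setIntegral_cube_mul_pder_of_tsupport_subset (hu : ContDiff ℝ (⊤ : ℕ∞) u) (hup : ZPer u)
    (hF : ContDiff ℝ (⊤ : ℕ∞) F) (hsupp : tsupport F ⊆ openCube d) :
    ∫ x in cube d, u x * pder i F x = - ∫ x in cube d, pder i u x * F x := by
  have hibp := setIntegral_cube_mul_pder i hu hup (contDiff_comp_fractVec hF hsupp)
    (zPer_comp_fractVec F)
  have hpder : ∫ x in cube d, u x * pder i F x =
      ∫ x in cube d, u x * pder i (fun z => F (fractVec z)) x :=
    integral_congr_ae ((ae_mem_openCube d).mono fun x hx => by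
      simp only [pder_comp_fractVec i hx])
  rw [hpder, hibp]
  exact congrArg Neg.neg (setIntegral_congr_fun (measurableSet_cube d) fun x hx => by
    simp only [fractVec_of_mem_cube hx])

theorem pder_comp_sub_right (a x : Fin d → ℝ) :
    pder i (fun z => u (z - a)) x = pder i u (x - a) := by
  simp only [pder, sub_eq_add_neg, fderiv_comp_add_right]

theorem setIntegral_cellAverage_mul_pder (ε : ℝ) (hu : ContDiff ℝ (⊤ : ℕ∞) u) (hup : ZPer u)
    (hF : ContDiff ℝ (⊤ : ℕ∞) F) (hsupp : tsupport F ⊆ openCube d) :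
    ∫ x in cube d, cellAverage ε u x * pder i F x =
      - ∫ x in cube d, cellAverage ε (pder i u) x * F x := by
  have hpder := (contDiff_pder i hu).continuous
  have hFi := (contDiff_pder i hF).continuous
  have huc := hu.continuous
  have hFc := hF.continuous
  rw [setIntegral_cellAverage_mul ε huc hup (integrable_cube_of_continuous hFi),
    setIntegral_cellAverage_mul ε hpder (hup.pder i) (integrable_cube_of_continuous hFc),
    integral_prod_symm _ (integrable_cellMeasure_of_continuous (by fun_prop)),
    integral_prod_symm _ (integrable_cellMeasure_of_continuous (by fun_prop)), ← integral_neg]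
  refine integral_congr_ae (Eventually.of_forall fun z => ?_)
  have hibp := setIntegral_cube_mul_pder_of_tsupport_subset i
    (u := fun x => u (x - ε • z)) (hu.comp (contDiff_id.sub contDiff_const))
    (by simpa only [sub_eq_add_neg] using hup.comp_add_right (-(ε • z))) hF hsupp
  simpa only [pder_comp_sub_right] using hibp

theorem setIntegral_corrector_mul_pder {θ η : (Fin d → ℝ) → ℝ} (hε : ε ≠ 0)
    (hu : ContDiff ℝ (⊤ : ℕ∞) u) (hup : ZPer u) (hθ : ContDiff ℝ (⊤ : ℕ∞) θ)
    (hsupp : tsupport θ ⊆ openCube d) (hη : ContDiff ℝ (⊤ : ℕ∞) η) :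
    ∫ x in cube d, corrector ε u x * (θ x * pder i η (ε⁻¹ • x)) =
      (∫ x in cube d, cellAverage ε (pder i u) x * (θ x * η (ε⁻¹ • x))) -
        (∫ x in cube d, pder i u x * (θ x * η (ε⁻¹ • x))) -
        ε * ∫ x in cube d, corrector ε u x * (pder i θ x * η (ε⁻¹ • x)) := by
  have hηε : ContDiff ℝ (⊤ : ℕ∞) fun x => η (ε⁻¹ • x) := hη.comp (contDiff_const_smul _)
  have hF : ContDiff ℝ (⊤ : ℕ∞) fun x => θ x * η (ε⁻¹ • x) := hθ.mul hηε
  have hFsupp : tsupport (fun x => θ x * η (ε⁻¹ • x)) ⊆ openCube d :=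
    (tsupport_mul_subset_left (f := θ)).trans hsupp
  have hFi (x) : pder i (fun x => θ x * η (ε⁻¹ • x)) x =
      ε⁻¹ * (θ x * pder i η (ε⁻¹ • x)) + pder i θ x * η (ε⁻¹ • x) := by
    rw [pder_mul i (hθ.differentiable (by simp)) (hηε.differentiable (by simp)),
      pder_comp_smul]
    ring
  have huc := hu.continuous
  have havg := continuous_cellAverage ε huc hup
  have hcor := continuous_corrector ε huc hup
  have hθi := (contDiff_pder i hθ).continuous
  have hηi := (contDiff_pder i hη).continuous
  have hθc := hθ.continuous
  have hηc := hη.continuous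
  have hFic := (contDiff_pder i hF).continuous
  have hsplit : (∫ x in cube d, corrector ε u x * (θ x * pder i η (ε⁻¹ • x))) +
      ε * ∫ x in cube d, corrector ε u x * (pder i θ x * η (ε⁻¹ • x)) =
      (∫ x in cube d, u x * pder i (fun x => θ x * η (ε⁻¹ • x)) x) -
        ∫ x in cube d, cellAverage ε u x * pder i (fun x => θ x * η (ε⁻¹ • x)) x := by
    rw [← integral_const_mul, ← integral_add (integrable_cube_of_continuous (by fun_prop))
      (integrable_cube_of_continuous (by fun_prop)),
      ← integral_sub (integrable_cube_of_continuous (by fun_prop))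
      (integrable_cube_of_continuous (by fun_prop))]
    refine integral_congr_ae (Eventually.of_forall fun x => ?_)
    simp only [hFi, corrector]
    field_simp
  rw [setIntegral_cube_mul_pder_of_tsupport_subset i hu hup hF hFsupp,
    setIntegral_cellAverage_mul_pder i ε hu hup hF hFsupp] at hsplit
  linarith

end IntegrationByParts

end Corrector

section CorrectorLimit

variable {d : ℕ} {ε : ℕ → ℝ}

theorem twoScaleW_cellAverage (hε : ∀ n, ε n ≠ 0) (hε₀ : Tendsto ε atTop (𝓝 0))
    {w : ℕ → (Fin d → ℝ) → ℝ} (hw : ∀ n, Continuous (w n)) (hwp : ∀ n, ZPer (w n))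
    (hUI : UniformIntegrable w 1 (volume.restrict (cube d))) {f : (Fin d → ℝ) → ℝ}
    (h : WeakConvCube w f) :
    TwoScaleW ε (fun n => cellAverage (ε n) (w n)) fun x _ => f x := fun ψ hψ => by
  have hψc := hψ.1.continuous
  have hψc' : Continuous fun p : (Fin d → ℝ) × (Fin d → ℝ) => ψ p.1 p.2 := hψc
  obtain ⟨M, hM⟩ := hψ.exists_abs_le
  have hint n : Integrable (fun p : (Fin d → ℝ) × (Fin d → ℝ) =>
      w n p.1 * ψ p.1 ((ε n)⁻¹ • p.1 + p.2)) (cellMeasure d) :=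
    integrable_mul_of_abs_le ((integrable_cube_of_continuous (hw n)).comp_fst _)
      (Continuous.measurable (by fun_prop)) fun p => hM _ _
  have hmean n : ∫ p, w n p.1 * ψ p.1 ((ε n)⁻¹ • p.1 + p.2) ∂cellMeasure d =
      ∫ x in cube d, w n x * ∫ y in cube d, ψ x y := by
    rw [integral_prod _ (hint n)]
    simp only [integral_const_mul, add_comm ((ε n)⁻¹ • _), (hψ.2.2 _).setIntegral_cube_add_right]
  have haverage n : ∫ x in cube d, cellAverage (ε n) (w n) x * ψ x ((ε n)⁻¹ • x) =
      ∫ p, w n (p.1 - ε n • p.2) * ψ p.1 ((ε n)⁻¹ • p.1) ∂cellMeasure d :=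
    setIntegral_cellAverage_mul (ε n) (hw n) (hwp n)
      (integrable_cube_of_continuous (f := fun x => ψ x ((ε n)⁻¹ • x)) (by fun_prop))
  have hdiff := tendsto_integral_shear_sub hε hε₀ hw hwp hUI hψc hψ.2.2 hM (-1) 0
  have hweak := h (fun x => ∫ y in cube d, ψ x y)
    (hψc.stronglyMeasurable.integral_prod_right'.measurable) ⟨M, fun x => ?_⟩
  · have hlim := hdiff.add hweak
    simp only [neg_one_mul, neg_smul, ← sub_eq_add_neg, zero_smul, add_zero, sub_neg_eq_add,
      zero_add, one_smul, hmean, sub_add_cancel, ← haverage] at hlim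
    simpa only [integral_const_mul] using hlim
  · simpa using abs_integral_le_integral_abs.trans (integral_mono
      (integrable_cube_of_continuous (by fun_prop)) (integrable_const M) (hM x))

theorem setIntegral_mul_pder_eq_of_twoScaleW_corrector (hε : ∀ n, ε n ≠ 0)
    (hε₀ : Tendsto ε atTop (𝓝 0)) {u : ℕ → (Fin d → ℝ) → ℝ}
    (hu : ∀ n, ContDiff ℝ (⊤ : ℕ∞) (u n)) (hup : ∀ n, ZPer (u n)) (i : Fin d)
    (hUI : UniformIntegrable (fun n => pder i (u n)) 1 (volume.restrict (cube d)))
    {g : (Fin d → ℝ) → ℝ} (hg : WeakConvCube (fun n => pder i (u n)) g)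
    {U G : (Fin d → ℝ) → (Fin d → ℝ) → ℝ}
    (hU : TwoScaleW ε (fun n => corrector (ε n) (u n)) U)
    (hG : TwoScaleW ε (fun n => pder i (u n)) G) {θ η : (Fin d → ℝ) → ℝ}
    (hθ : ContDiff ℝ (⊤ : ℕ∞) θ) (hsupp : tsupport θ ⊆ openCube d)
    (hη : ContDiff ℝ (⊤ : ℕ∞) η) (hηp : ZPer η) :
    ∫ x in cube d, ∫ y in cube d, U x y * (θ x * pder i η y) =
      (∫ x in cube d, ∫ y in cube d, g x * (θ x * η y)) -
        ∫ x in cube d, ∫ y in cube d, G x y * (θ x * η y) := by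
  have hsupp' : tsupport (pder i θ) ⊆ openCube d :=
    (tsupport_fderiv_apply_subset ℝ (Pi.single i 1)).trans hsupp
  have havg := twoScaleW_cellAverage hε hε₀ (fun n => (contDiff_pder i (hu n)).continuous)
    (fun n => (hup n).pder i) hUI hg
  have hright := ((havg.tendsto_setIntegral_mul hθ hsupp hη hηp).sub
    (hG.tendsto_setIntegral_mul hθ hsupp hη hηp)).sub
    (hε₀.mul (hU.tendsto_setIntegral_mul (contDiff_pder i hθ) hsupp' hη hηp))
  have hleft := hU.tendsto_setIntegral_mul hθ hsupp (contDiff_pder i hη) (hηp.pder i)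
  simp only [setIntegral_corrector_mul_pder i (hε _) (hu _) (hup _) hθ hsupp hη] at hleft
  simpa only [zero_mul, sub_zero] using tendsto_nhds_unique hleft hright

end CorrectorLimit

section WeakDerivative

variable {d : ℕ}

theorem exists_dense_seq_smooth_zPer (d : ℕ) : ∃ D : ℕ → (Fin d → ℝ) → ℝ,
    (∀ k, ContDiff ℝ (⊤ : ℕ∞) (D k)) ∧ (∀ k, ZPer (D k)) ∧
    ∀ η : (Fin d → ℝ) → ℝ, ContDiff ℝ (⊤ : ℕ∞) η → ZPer η → ∃ κ : ℕ → ℕ,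
      TendstoUniformly (fun n => D (κ n)) η atTop ∧
      ∀ i, TendstoUniformly (fun n => pder i (D (κ n))) (pder i η) atTop := by
  let K := Set.Icc (0 : Fin d → ℝ) 1
  let S := {η : (Fin d → ℝ) → ℝ // ContDiff ℝ (⊤ : ℕ∞) η ∧ ZPer η}
  let jet : S → C(K, ℝ) × (Fin d → C(K, ℝ)) := fun η =>
    (⟨fun x => η.1 x, η.2.1.continuous.comp continuous_subtype_val⟩, fun i =>
      ⟨fun x => pder i η.1 x, (contDiff_pder i η.2.1).continuous.comp continuous_subtype_val⟩)
  let r (x : Fin d → ℝ) : K := ⟨fractVec x, cube_subset_Icc d (fractVec_mem_cube x)⟩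
  have : Nonempty S := ⟨⟨fun _ => 0, contDiff_const, fun _ _ => rfl⟩⟩
  choose D hD using fun k => (TopologicalSpace.denseSeq (Set.range jet) k).2
  refine ⟨fun k => (D k).1, fun k => (D k).2.1, fun k => (D k).2.2, fun η hη hηp => ?_⟩
  obtain ⟨s, hs, hlim⟩ := mem_closure_iff_seq_limit.mp
    (TopologicalSpace.denseRange_denseSeq (Set.range jet) ⟨jet ⟨η, hη, hηp⟩, Set.mem_range_self _⟩)
  choose κ hκ using hs
  have hjet : Tendsto (fun n => jet (D (κ n))) atTop (𝓝 (jet ⟨η, hη, hηp⟩)) := by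
    refine ((continuous_subtype_val.tendsto _).comp hlim).congr fun n => ?_
    rw [comp_apply, hD, hκ]
  refine ⟨κ, ?_, fun i => ?_⟩
  · have h := (ContinuousMap.tendsto_iff_tendstoUniformly.mp hjet.fst_nhds).comp r
    convert h using 1
    · exact funext₂ fun n x => ((D (κ n)).2.2.apply_fractVec x).symm
    · exact funext fun x => (hηp.apply_fractVec x).symm
  · have h := (ContinuousMap.tendsto_iff_tendstoUniformly.mp
      (tendsto_pi_nhds.mp hjet.snd_nhds i)).comp r
    convert h using 1
    · exact funext₂ fun n x => (((D (κ n)).2.2.pder i).apply_fractVec x).symm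
    · exact funext fun x => ((hηp.pder i).apply_fractVec x).symm

theorem weakPDer_of_forall_dense {D : ℕ → (Fin d → ℝ) → ℝ} {i : Fin d}
    (hD : ∀ k, ContDiff ℝ (⊤ : ℕ∞) (D k))
    (hdense : ∀ η : (Fin d → ℝ) → ℝ, ContDiff ℝ (⊤ : ℕ∞) η → ZPer η → ∃ κ : ℕ → ℕ,
      TendstoUniformly (fun n => D (κ n)) η atTop ∧
      TendstoUniformly (fun n => pder i (D (κ n))) (pder i η) atTop)
    {v g : (Fin d → ℝ) → ℝ} (hv : IntegrableOn v (cube d)) (hg : IntegrableOn g (cube d))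
    (h : ∀ k, ∫ x in cube d, v x * pder i (D k) x = - ∫ x in cube d, g x * D k x) :
    WeakPDer i v g := fun η hη hηp => by
  obtain ⟨κ, hκ, hκ'⟩ := hdense η hη hηp
  obtain ⟨M, hM⟩ := hηp.exists_abs_le hη.continuous
  obtain ⟨M', hM'⟩ := (hηp.pder i).exists_abs_le (contDiff_pder i hη).continuous
  have hleft := tendsto_integral_mul_of_tendstoUniformly hv
    (fun n => (contDiff_pder i (hD (κ n))).continuous.measurable) hM' hκ'
  have hright := tendsto_integral_mul_of_tendstoUniformly hg
    (fun n => (hD (κ n)).continuous.measurable) hM hκ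
  simp only [h] at hleft
  exact tendsto_nhds_unique hleft hright.neg

theorem ae_weakPDer_of_forall_setIntegral_mul {A B : (Fin d → ℝ) × (Fin d → ℝ) → ℝ}
    (hA : Integrable A (cellMeasure d)) (hB : Integrable B (cellMeasure d)) (i : Fin d)
    (h : ∀ θ η : (Fin d → ℝ) → ℝ, ContDiff ℝ (⊤ : ℕ∞) θ → tsupport θ ⊆ openCube d →
      ContDiff ℝ (⊤ : ℕ∞) η → ZPer η →
      ∫ x in cube d, ∫ y in cube d, A (x, y) * (θ x * pder i η y) =
        - ∫ x in cube d, ∫ y in cube d, B (x, y) * (θ x * η y)) :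
    ∀ᵐ x ∂volume.restrict (cube d), WeakPDer i (fun y => A (x, y)) fun y => B (x, y) := by
  obtain ⟨D, hD, hDp, hdense⟩ := exists_dense_seq_smooth_zPer d
  have hint {F : (Fin d → ℝ) × (Fin d → ℝ) → ℝ} (hF : Integrable F (cellMeasure d))
      {η : (Fin d → ℝ) → ℝ} (hη : ContDiff ℝ (⊤ : ℕ∞) η) (hηp : ZPer η) :
      IntegrableOn (fun x => ∫ y in cube d, F (x, y) * η y) (cube d) := by
    obtain ⟨M, hM⟩ := hηp.exists_abs_le hη.continuous
    exact (integrable_mul_of_abs_le hF (hη.continuous.measurable.comp measurable_snd)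
      fun p => hM p.2).integral_prod_left
  have hzero k : (fun x => (∫ y in cube d, A (x, y) * pder i (D k) y) +
      ∫ y in cube d, B (x, y) * D k y) =ᵐ[volume.restrict (cube d)] 0 := by
    have hAD := hint hA (contDiff_pder i (hD k)) ((hDp k).pder i)
    have hBD := hint hB (hD k) (hDp k)
    refine ae_eq_zero_of_forall_setIntegral_mul_eq_zero (hAD.add hBD) fun θ hθ hsupp => ?_
    obtain ⟨M, hM⟩ := (hasCompactSupport_of_tsupport_subset_openCube hsupp)
      |>.exists_bound_of_continuous hθ.continuous
    have hθm := hθ.continuous.measurable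
    have hpull (a : ℝ) (F : (Fin d → ℝ) × (Fin d → ℝ) → ℝ) (η : (Fin d → ℝ) → ℝ)
        (x : Fin d → ℝ) : (∫ y in cube d, F (x, y) * η y) * a =
          ∫ y in cube d, F (x, y) * (a * η y) := by
      rw [← integral_mul_const]
      simp only [mul_assoc, mul_comm a]
    simp only [add_mul]
    rw [integral_add (integrable_mul_of_abs_le hAD hθm hM) (integrable_mul_of_abs_le hBD hθm hM)]
    simp only [hpull, h θ (D k) hθ hsupp (hD k) (hDp k), neg_add_cancel]
  filter_upwards [ae_all_iff.mpr hzero, hA.prod_right_ae, hB.prod_right_ae] with x hx hAx hBx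
  exact weakPDer_of_forall_dense hD
    (fun η hη hηp => (hdense η hη hηp).imp fun κ hκ => ⟨hκ.1, hκ.2 i⟩) hAx hBx
    fun k => eq_neg_of_add_eq_zero_left (hx k)

theorem ae_weakPDer_of_twoScaleW_corrector {ε : ℕ → ℝ} (hε : ∀ n, ε n ≠ 0)
    (hε₀ : Tendsto ε atTop (𝓝 0)) {u : ℕ → (Fin d → ℝ) → ℝ}
    (hu : ∀ n, ContDiff ℝ (⊤ : ℕ∞) (u n)) (hup : ∀ n, ZPer (u n)) (i : Fin d)
    (hUI : UniformIntegrable (fun n => pder i (u n)) 1 (volume.restrict (cube d)))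
    {g : (Fin d → ℝ) → ℝ} {U G : (Fin d → ℝ) × (Fin d → ℝ) → ℝ} (hgint : IntegrableOn g (cube d))
    (hUint : Integrable U (cellMeasure d)) (hGint : Integrable G (cellMeasure d))
    (hg : WeakConvCube (fun n => pder i (u n)) g)
    (hU : TwoScaleW ε (fun n => corrector (ε n) (u n)) (curry U))
    (hG : TwoScaleW ε (fun n => pder i (u n)) (curry G)) :
    ∀ᵐ x ∂volume.restrict (cube d),
      WeakPDer i (fun y => U (x, y)) fun y => G (x, y) - g x := by
  have hgfst : Integrable (fun p => g p.1) (cellMeasure d) := hgint.comp_fst _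
  refine ae_weakPDer_of_forall_setIntegral_mul hUint (hGint.sub hgfst) i
    fun θ η hθ hsupp hη hηp => ?_
  obtain ⟨M, hM⟩ := (hasCompactSupport_of_tsupport_subset_openCube hsupp)
    |>.exists_bound_of_continuous hθ.continuous
  obtain ⟨M', hM'⟩ := hηp.exists_abs_le hη.continuous
  have hint {F : (Fin d → ℝ) × (Fin d → ℝ) → ℝ} (hF : Integrable F (cellMeasure d)) :
      Integrable (fun p => F p * (θ p.1 * η p.2)) (cellMeasure d) := by
    refine integrable_mul_of_abs_le (M := M * M') hF
      ((hθ.continuous.measurable.comp measurable_fst).mul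
        (hη.continuous.measurable.comp measurable_snd)) fun p => ?_
    rw [abs_mul]
    exact mul_le_mul (hM p.1) (hM' p.2) (abs_nonneg _) ((abs_nonneg _).trans (hM p.1))
  refine (setIntegral_mul_pder_eq_of_twoScaleW_corrector hε hε₀ hu hup i hUI hg hU hG hθ hsupp hη
    hηp).trans ?_
  have hprod {F : (Fin d → ℝ) × (Fin d → ℝ) → ℝ} (hF : Integrable F (cellMeasure d)) :
      ∫ p, F p * (θ p.1 * η p.2) ∂cellMeasure d =
        ∫ x in cube d, ∫ y in cube d, F (x, y) * (θ x * η y) := integral_prod _ (hint hF)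
  refine Eq.trans (congrArg₂ (· - ·) (hprod hgfst).symm (hprod hGint).symm)
    (Eq.trans ?_ (congrArg Neg.neg (hprod (hGint.sub hgfst))))
  rw [← integral_sub (hint hgfst) (hint hGint), ← integral_neg]
  refine integral_congr_ae (Eventually.of_forall fun p => ?_)
  simp only [Pi.sub_apply]
  ring

end WeakDerivative

section APriori

variable {d : ℕ}

theorem setIntegral_cube_sum_mul_pder_eq_zero {w : Fin d → (Fin d → ℝ) → ℝ} {v : (Fin d → ℝ) → ℝ}
    (hw : ∀ i, ContDiff ℝ (⊤ : ℕ∞) (w i)) (hwp : ∀ i, ZPer (w i))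
    (hdiv : ∀ x, ∑ i, pder i (w i) x = 0) (hv : ContDiff ℝ (⊤ : ℕ∞) v) (hvp : ZPer v) :
    ∫ x in cube d, ∑ i, w i x * pder i v x = 0 := by
  have hpder i := (contDiff_pder i (hw i)).continuous
  have hpder' i := (contDiff_pder i hv).continuous
  have hwc i := (hw i).continuous
  have hvc := hv.continuous
  rw [integral_finsetSum _ fun i _ => integrable_cube_of_continuous (by fun_prop)]
  simp only [setIntegral_cube_mul_pder _ (hw _) (hwp _) hv hvp]
  rw [Finset.sum_neg_distrib,
    ← integral_finsetSum _ fun i _ => integrable_cube_of_continuous (by fun_prop)]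
  simp only [← Finset.sum_mul, hdiv, zero_mul, integral_zero, neg_zero]

/-- The kinetic term `|P + ∇u|² / 2` of the Hamilton–Jacobi equation. -/
def kineticEnergy (P : Fin d → ℝ) (u : (Fin d → ℝ) → ℝ) (x : Fin d → ℝ) : ℝ :=
  (∑ i, (P i + pder i u x) ^ 2) / 2

variable {P : Fin d → ℝ} {u : (Fin d → ℝ) → ℝ}

theorem kineticEnergy_nonneg (x : Fin d → ℝ) : 0 ≤ kineticEnergy P u x :=
  div_nonneg (Finset.sum_nonneg fun _ _ => sq_nonneg _) zero_le_two

theorem continuous_kineticEnergy (hu : ContDiff ℝ (⊤ : ℕ∞) u) :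
    Continuous (kineticEnergy P u) := by
  have hpder i := (contDiff_pder i hu).continuous
  unfold kineticEnergy
  fun_prop

theorem gradNorm_le_kineticEnergy (x : Fin d → ℝ) :
    gradNorm u x ≤ ∑ i, (|P i| + 1) + 2 * kineticEnergy P u x := by
  rw [kineticEnergy, mul_div_cancel₀ _ (two_ne_zero' ℝ), ← Finset.sum_add_distrib]
  refine Finset.sum_le_sum fun i _ => ?_
  have htri : |pder i u x| ≤ |P i + pder i u x| + |P i| := by
    simpa using abs_sub (P i + pder i u x) (P i)
  nlinarith [sq_abs (P i + pder i u x), sq_nonneg (|P i + pder i u x| - 1)]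

variable {V : (Fin d → ℝ) → (Fin d → ℝ) → ℝ} {ε : ℝ} {m : (Fin d → ℝ) → ℝ} {H : ℝ}

namespace SolvesMFG

variable (h : SolvesMFG P V ε u m H)

include h

theorem contDiff : ContDiff ℝ (⊤ : ℕ∞) u := h.1

theorem zPer : ZPer u := h.2.1

theorem continuous_density : Continuous m := h.2.2.1.continuous

theorem zPer_density : ZPer m := h.2.2.2.1

theorem density_pos (x : Fin d → ℝ) : 0 < m x := h.2.2.2.2.1 x

theorem kineticEnergy_add (x : Fin d → ℝ) :
    kineticEnergy P u x + V x (ε⁻¹ • x) = Real.log (m x) + H := h.2.2.2.2.2.1 x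

theorem setIntegral_eq_zero : ∫ x in cube d, u x = 0 := h.2.2.2.2.2.2.2.1

theorem setIntegral_density : ∫ x in cube d, m x = 1 := h.2.2.2.2.2.2.2.2

/-- The flux `m (P + ∇u)` is orthogonal to `∇u`. -/
theorem setIntegral_density_mul_kineticEnergy_le :
    ∫ x in cube d, m x * kineticEnergy P u x ≤ (∑ i, P i ^ 2) / 2 := by
  have hpder i := (contDiff_pder i h.contDiff).continuous
  have hkin := continuous_kineticEnergy (P := P) h.contDiff
  have hm := h.continuous_density
  have hflux : ∫ x in cube d, ∑ i, (m x * (P i + pder i u x)) * pder i u x = 0 :=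
    setIntegral_cube_sum_mul_pder_eq_zero (w := fun i x => m x * (P i + pder i u x))
      (fun i => h.2.2.1.mul (contDiff_const.add (contDiff_pder i h.contDiff)))
      (fun i x k => by simp only [h.zPer_density x k, h.zPer.pder i x k])
      h.2.2.2.2.2.2.1 h.contDiff h.zPer
  have hpointwise (x) : m x * kineticEnergy P u x ≤
      ∑ i, (m x * (P i + pder i u x)) * pder i u x + (∑ i, P i ^ 2) / 2 * m x := by
    have hsum : kineticEnergy P u x ≤
        ∑ i, (P i + pder i u x) * pder i u x + (∑ i, P i ^ 2) / 2 := by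
      rw [kineticEnergy, Finset.sum_div, Finset.sum_div, ← Finset.sum_add_distrib]
      exact Finset.sum_le_sum fun i _ => by nlinarith [sq_nonneg (pder i u x)]
    simp only [mul_assoc, ← Finset.mul_sum]
    nlinarith [mul_le_mul_of_nonneg_left hsum (h.density_pos x).le]
  have hint := integral_mono (integrable_cube_of_continuous (by fun_prop))
    (integrable_cube_of_continuous (by fun_prop)) hpointwise
  rwa [integral_add (integrable_cube_of_continuous (by fun_prop))
    (integrable_cube_of_continuous (by fun_prop)), hflux, integral_const_mul,
    h.setIntegral_density, zero_add, mul_one] at hint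

variable {B : ℝ} (hB : ∀ x y, |V x y| ≤ B)

include hB

theorem log_density_le (x : Fin d → ℝ) : Real.log (m x) ≤ kineticEnergy P u x + (B - H) := by
  linarith [h.kineticEnergy_add x, le_of_abs_le (hB x (ε⁻¹ • x))]

theorem kineticEnergy_le (x : Fin d → ℝ) : kineticEnergy P u x ≤ Real.log (m x) + (B + H) := by
  linarith [h.kineticEnergy_add x, neg_le_of_abs_le (hB x (ε⁻¹ • x))]

theorem setIntegral_klFun_density_le :
    ∫ x in cube d, InformationTheory.klFun (m x) ≤ (∑ i, P i ^ 2) / 2 + (B - H) := by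
  have hkin := continuous_kineticEnergy (P := P) h.contDiff
  have hm := h.continuous_density
  have hkl := InformationTheory.continuous_klFun.comp hm
  have hpointwise (x) : InformationTheory.klFun (m x) ≤
      m x * kineticEnergy P u x + ((B - H - 1) * m x + 1) := by
    rw [InformationTheory.klFun_apply]
    nlinarith [mul_le_mul_of_nonneg_left (h.log_density_le hB x) (h.density_pos x).le]
  calc ∫ x in cube d, InformationTheory.klFun (m x)
      ≤ ∫ x in cube d, (m x * kineticEnergy P u x + ((B - H - 1) * m x + 1)) :=
        integral_mono (integrable_cube_of_continuous hkl)
          (integrable_cube_of_continuous (by fun_prop)) hpointwise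
    _ = (∫ x in cube d, m x * kineticEnergy P u x) + (B - H) := by
        rw [integral_add (integrable_cube_of_continuous (by fun_prop))
          (integrable_cube_of_continuous (by fun_prop)), integral_add
          (integrable_cube_of_continuous (by fun_prop)) (integrable_const _), integral_const_mul,
          h.setIntegral_density]
        simp
    _ ≤ _ := by gcongr; exact h.setIntegral_density_mul_kineticEnergy_le

theorem neg_le_effectiveHamiltonian : -B ≤ H := by
  have hmean : Real.exp (-(B + H)) ≤ ∫ x in cube d, m x := by
    have hpointwise (x) : Real.exp (-(B + H)) ≤ m x := by
      rw [← Real.le_log_iff_exp_le (h.density_pos x)]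
      linarith [h.kineticEnergy_le hB x, kineticEnergy_nonneg (P := P) (u := u) x]
    simpa using integral_mono (integrable_const _)
      (integrable_cube_of_continuous h.continuous_density) hpointwise
  rw [h.setIntegral_density, Real.exp_le_one_iff] at hmean
  linarith

theorem effectiveHamiltonian_le : H ≤ (∑ i, P i ^ 2) / 2 + B := by
  have hkl : 0 ≤ ∫ x in cube d, InformationTheory.klFun (m x) :=
    integral_nonneg fun x => InformationTheory.klFun_nonneg (h.density_pos x).le
  linarith [h.setIntegral_klFun_density_le hB]

theorem setIntegral_gradNorm_pow_le (r : ℕ) : ∫ x in cube d, gradNorm u x ^ r ≤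
    2 ^ r * r.factorial * Real.exp ((∑ i, (|P i| + 1)) / 2 + (B + H)) := by
  have hgrad := continuous_gradNorm h.contDiff
  have hpointwise (x) : gradNorm u x ^ r ≤
      2 ^ r * r.factorial * Real.exp ((∑ i, (|P i| + 1)) / 2 + (B + H)) * m x := by
    have hexp : gradNorm u x / 2 ≤ (∑ i, (|P i| + 1)) / 2 + (B + H) + Real.log (m x) := by
      linarith [gradNorm_le_kineticEnergy (P := P) (u := u) x, h.kineticEnergy_le hB x]
    calc gradNorm u x ^ r
        = 2 ^ r * r.factorial * ((gradNorm u x / 2) ^ r / r.factorial) := by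
          rw [div_pow]; field_simp
      _ ≤ 2 ^ r * r.factorial * Real.exp (gradNorm u x / 2) := by
          gcongr
          exact Real.pow_div_factorial_le_exp _ (div_nonneg (gradNorm_nonneg u x) zero_le_two) r
      _ ≤ 2 ^ r * r.factorial *
            Real.exp ((∑ i, (|P i| + 1)) / 2 + (B + H) + Real.log (m x)) := by gcongr
      _ = _ := by rw [Real.exp_add _ (Real.log _), Real.exp_log (h.density_pos x), ← mul_assoc]
  refine (integral_mono (integrable_cube_of_continuous (by fun_prop))
    ((integrable_cube_of_continuous h.continuous_density).const_mul _) hpointwise).trans_eq ?_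
  rw [integral_const_mul, h.setIntegral_density, mul_one]

end SolvesMFG

end APriori

section Sobolev

variable {d : ℕ} {ε : ℕ → ℝ}

theorem uniformIntegrable_of_setIntegral_cube_sq_le {ι : Type*} {w : ι → (Fin d → ℝ) → ℝ} {C : ℝ}
    (hw : ∀ i, Continuous (w i)) (hC : ∀ i, ∫ x in cube d, |w i x| ^ 2 ≤ C) :
    UniformIntegrable w 1 (volume.restrict (cube d)) :=
  uniformIntegrable_of_integral_sq_le (fun i => (hw i).aestronglyMeasurable)
    (fun i => integrable_cube_of_continuous ((hw i).abs.pow 2)) hC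

theorem exists_subseq_twoScaleW_memLp {ι : Type*} [Countable ι] (hε : ∀ n, ε n ≠ 0)
    (hε₀ : Tendsto ε atTop (𝓝 0)) {w : ι → ℕ → (Fin d → ℝ) → ℝ}
    (hw : ∀ i n, Continuous (w i n)) (hwp : ∀ i n, ZPer (w i n))
    (hC : ∀ i (r : ℕ), ∃ C, ∀ n, ∫ x in cube d, |w i n x| ^ r ≤ C) :
    ∃ φ : ℕ → ℕ, StrictMono φ ∧ ∃ W : ι → (Fin d → ℝ) × (Fin d → ℝ) → ℝ,
      (∀ i x, ZPer fun y => W i (x, y)) ∧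
      (∀ i (q : ENNReal), q ≠ ⊤ → MemLp (W i) q (cellMeasure d)) ∧
      (∀ i (q : ENNReal), q ≠ ⊤ →
        MemLp (fun x => ∫ y in cube d, W i (x, y)) q (volume.restrict (cube d))) ∧
      (∀ i, TwoScaleW (fun n => ε (φ n)) (fun n => w i (φ n)) (curry (W i))) ∧
      ∀ i, WeakConvCube (fun n => w i (φ n)) fun x => ∫ y in cube d, W i (x, y) := by
  have hpow i n (r : ℕ) : Continuous fun x => |w i n x| ^ r := (hw i n).abs.pow r
  obtain ⟨φ, hφ, W, hWp, hW, hunfold, htwo, hweak⟩ :=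
    exists_subseq_twoScaleW hε hε₀ hw hwp fun i =>
      (hC i 2).elim fun C hC => uniformIntegrable_of_setIntegral_cube_sq_le (hw i) hC
  refine ⟨φ, hφ, W, hWp, fun i q hq => ?_, fun i q hq => ?_, htwo, hweak⟩
  · have hT n := measurePreserving_unfoldMap (d := d) (ε (φ n))
    refine WeakConv.memLp (hunfold i) (fun n => (hT n).integrable_comp_of_integrable
        (integrable_cube_of_continuous (hw i _))) (hW i)
      (fun r n => (hT n).integrable_comp_of_integrable
        (integrable_cube_of_continuous (hpow i _ r))) (fun r => ?_) hq
    obtain ⟨C, hC⟩ := hC i r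
    exact ⟨C, fun n => (integral_comp_measurePreserving (hT n)
      (hpow i (φ n) r).measurable).trans_le (hC (φ n))⟩
  · exact WeakConv.memLp (hweak i) (fun n => integrable_cube_of_continuous (hw i _))
      (hW i).integral_prod_left (fun r n => integrable_cube_of_continuous (hpow i _ r))
      (fun r => (hC i r).imp fun C hC n => hC (φ n)) hq

theorem setIntegral_abs_pder_pow_le {u : (Fin d → ℝ) → ℝ} (hu : ContDiff ℝ (⊤ : ℕ∞) u)
    (i : Fin d) (r : ℕ) : ∫ x in cube d, |pder i u x| ^ r ≤ ∫ x in cube d, gradNorm u x ^ r :=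
  integral_mono (integrable_cube_of_continuous ((contDiff_pder i hu).continuous.abs.pow r))
    (integrable_cube_of_continuous ((continuous_gradNorm hu).pow r))
    fun x => pow_le_pow_left₀ (abs_nonneg _) (abs_pder_le_gradNorm u i x) r

theorem weakPDer_of_weakConvCube {u : ℕ → (Fin d → ℝ) → ℝ} (hu : ∀ n, ContDiff ℝ (⊤ : ℕ∞) (u n))
    (hup : ∀ n, ZPer (u n)) {i : Fin d} {u₀ g : (Fin d → ℝ) → ℝ} (h : WeakConvCube u u₀)
    (hg : WeakConvCube (fun n => pder i (u n)) g) : WeakPDer i u₀ g := fun η hη hηp => by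
  have hη' := contDiff_pder i hη
  have hleft := h _ hη'.continuous.measurable ((hηp.pder i).exists_abs_le hη'.continuous)
  have hright := (hg η hη.continuous.measurable (hηp.exists_abs_le hη.continuous)).neg
  exact tendsto_nhds_unique hleft
    (hright.congr fun n => (setIntegral_cube_mul_pder i (hu n) (hup n) hη hηp).symm)

variable {u : ℕ → (Fin d → ℝ) → ℝ}

theorem exists_abs_sub_le_rpow_dist (hu : ∀ n, ContDiff ℝ (⊤ : ℕ∞) (u n)) (hup : ∀ n, ZPer (u n))
    {α : ℝ} (hα : α ∈ Set.Ioo 0 1)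
    (hC : ∀ r : ℕ, ∃ C, ∀ n, ∫ x in cube d, gradNorm (u n) x ^ r ≤ C) :
    ∃ C, ∀ n x y, |u n x - u n y| ≤ C ∧ |u n x - u n y| ≤ C * dist x y ^ α := by
  obtain ⟨p, hp⟩ := exists_nat_ge (d / (1 - α))
  have hdim : (d : ℝ) ≤ (1 - α) * (p + 1 : ℕ) := by
    push_cast
    linarith [(div_le_iff₀' (sub_pos.mpr hα.2)).mp hp, hα.2]
  obtain ⟨C, hC⟩ := hC (p + 1)
  have hK : (0 : ℝ) ≤ max C 1 := zero_le_one.trans (le_max_right _ _)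
  have huK n : ∫ x in cube d, gradNorm (u n) x ^ (p + 1) ≤ max C 1 ^ (p + 1) :=
    (hC n).trans ((le_max_left _ _).trans (le_self_pow₀ (le_max_right _ _) p.succ_ne_zero))
  exact ⟨2 / α * max C 1, fun n x y =>
    ⟨abs_sub_le_of_integral_gradNorm_pow_le (hu n) (hup n) p.succ_ne_zero hα.1 hdim hK (huK n) x y,
      abs_sub_le_rpow_dist (hu n) (hup n) p.succ_ne_zero hα.1 hdim hK (huK n) x y⟩⟩

theorem abs_le_of_setIntegral_cube_eq_zero {v : (Fin d → ℝ) → ℝ} (hv : Continuous v)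
    (hv₀ : ∫ x in cube d, v x = 0) {C : ℝ} (hC : ∀ x y, |v x - v y| ≤ C) (x : Fin d → ℝ) :
    |v x| ≤ C := by
  have hmean : v x = ∫ y in cube d, (v x - v y) := by
    rw [integral_sub (integrable_const _) (integrable_cube_of_continuous hv), hv₀]
    simp
  have hosc y : ‖v x - v y‖ ≤ C := hC x y
  rw [hmean]
  simpa using norm_integral_le_of_norm_le_const (μ := volume.restrict (cube d))
    (Eventually.of_forall hosc)

theorem exists_subseq_tendstoUniformly_of_gradNorm (hu : ∀ n, ContDiff ℝ (⊤ : ℕ∞) (u n))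
    (hup : ∀ n, ZPer (u n)) (hu₀ : ∀ n, ∫ x in cube d, u n x = 0) {α : ℝ}
    (hα : α ∈ Set.Ioo 0 1) (hC : ∀ r : ℕ, ∃ C, ∀ n, ∫ x in cube d, gradNorm (u n) x ^ r ≤ C) :
    ∃ φ : ℕ → ℕ, StrictMono φ ∧ ∃ u₀, HolderCont α u₀ ∧ ZPer u₀ ∧ ∫ x in cube d, u₀ x = 0 ∧
      TendstoUniformly (fun n => u (φ n)) u₀ atTop ∧ WeakConvCube (fun n => u (φ n)) u₀ := by
  obtain ⟨C, hC⟩ := exists_abs_sub_le_rpow_dist hu hup hα hC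
  obtain ⟨φ, hφ, u₀, hlim⟩ := exists_subseq_tendstoUniformly hup
    (equicontinuous_of_abs_sub_le_rpow_dist hα.1 fun n x y => (hC n x y).2)
    fun n => abs_le_of_setIntegral_cube_eq_zero (hu n).continuous (hu₀ n) fun x y => (hC n x y).1
  have hzPer : ZPer u₀ := zPer_of_tendsto (fun n => hup (φ n)) hlim.tendsto_at
  have hcont : Continuous u₀ :=
    hlim.continuous (Frequently.of_forall fun n => (hu (φ n)).continuous)
  obtain ⟨M, hM⟩ := hzPer.exists_abs_le hcont
  have hweak : WeakConvCube (fun n => u (φ n)) u₀ :=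
    weakConv_of_tendstoUniformly (fun n => (hu (φ n)).continuous.measurable) hM hlim
  refine ⟨φ, hφ, u₀, ⟨C, fun x y => ?_⟩, hzPer, ?_, hlim, hweak⟩
  · exact le_of_tendsto ((hlim.tendsto_at x).sub (hlim.tendsto_at y)).abs
      (Eventually.of_forall fun n => (hC (φ n) x y).2)
  · have hmean := hweak (fun _ => 1) measurable_const ⟨1, fun _ => abs_one.le⟩
    simp only [mul_one, hu₀] at hmean
    exact tendsto_nhds_unique hmean tendsto_const_nhds

theorem exists_subseq_twoScaleW_pder (hε : ∀ n, ε n ≠ 0) (hε₀ : Tendsto ε atTop (𝓝 0))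
    (hu : ∀ n, ContDiff ℝ (⊤ : ℕ∞) (u n)) (hup : ∀ n, ZPer (u n))
    (hC : ∀ r : ℕ, ∃ C, ∀ n, ∫ x in cube d, gradNorm (u n) x ^ r ≤ C) :
    ∃ φ : ℕ → ℕ, StrictMono φ ∧ ∃ (g₀ : (Fin d → ℝ) → Fin d → ℝ)
      (u₁ : (Fin d → ℝ) → (Fin d → ℝ) → ℝ) (g₁ : (Fin d → ℝ) → (Fin d → ℝ) → Fin d → ℝ),
      (∀ x, ZPer (u₁ x)) ∧ (∀ x i, ZPer fun y => g₁ x y i) ∧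
      (∀ᵐ x ∂volume.restrict (cube d), ∀ i, WeakPDer i (u₁ x) fun y => g₁ x y i) ∧
      (∀ q : ENNReal, q ≠ ⊤ → (∀ i, MemLp (fun x => g₀ x i) q (volume.restrict (cube d))) ∧
        MemLp (uncurry u₁) q (cellMeasure d) ∧
        ∀ i, MemLp (fun p => g₁ p.1 p.2 i) q (cellMeasure d)) ∧
      (∀ i, WeakConvCube (fun n => pder i (u (φ n))) fun x => g₀ x i) ∧
      ∀ i, TwoScaleW (fun n => ε (φ n)) (fun n => pder i (u (φ n)))
        fun x y => g₀ x i + g₁ x y i := by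
  let w (k : Option (Fin d)) n := k.elim (corrector (ε n) (u n)) fun i => pder i (u n)
  have hw k n : Continuous (w k n) := by
    cases k with
    | none => exact continuous_corrector (ε n) (hu n).continuous (hup n)
    | some i => exact (contDiff_pder i (hu n)).continuous
  have hwp k n : ZPer (w k n) := by
    cases k with
    | none => exact (hup n).corrector (ε n)
    | some i => exact (hup n).pder i
  have hwC k (r : ℕ) : ∃ C, ∀ n, ∫ x in cube d, |w k n x| ^ r ≤ C := by
    obtain ⟨C, hC⟩ := hC r
    refine ⟨C, fun n => le_trans ?_ (hC n)⟩
    cases k with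
    | none => exact setIntegral_abs_corrector_pow_le (hε n) (hu n) (hup n) r
    | some i => exact setIntegral_abs_pder_pow_le (hu n) i r
  obtain ⟨φ, hφ, W, hWp, hWq, hWq', htwo, hweak⟩ := exists_subseq_twoScaleW_memLp hε hε₀ hw hwp hwC
  let g₀ x i := ∫ y in cube d, W (some i) (x, y)
  let g₁ x y i := W (some i) (x, y) - g₀ x i
  refine ⟨φ, hφ, g₀, curry (W none), g₁, hWp none,
    fun x i y k => congrArg (· - g₀ x i) (hWp (some i) x y k), ae_all_iff.mpr fun i => ?_,
    fun q hq => ⟨fun i => hWq' (some i) q hq, hWq none q hq, fun i => ?_⟩,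
    fun i => hweak (some i), fun i => ?_⟩
  · obtain ⟨C, hC⟩ := hwC (some i) 2
    have hUI := uniformIntegrable_of_setIntegral_cube_sq_le (fun n => hw (some i) (φ n))
      fun n => hC (φ n)
    have hWint k : Integrable (W k) (cellMeasure d) :=
      memLp_one_iff_integrable.mp (hWq k 1 ENNReal.one_ne_top)
    exact ae_weakPDer_of_twoScaleW_corrector (fun n => hε (φ n)) (hε₀.comp hφ.tendsto_atTop)
      (fun n => hu (φ n)) (fun n => hup (φ n)) i hUI (hWint (some i)).integral_prod_left
      (hWint none) (hWint (some i)) (hweak (some i)) (htwo none) (htwo (some i))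
  · exact (hWq (some i) q hq).sub ((hWq' (some i) q hq).comp_fst _)
  · simp only [g₁, add_sub_cancel]
    exact htwo (some i)

end Sobolev

section MeanFieldGame

variable {d : ℕ}

theorem tendsto_klFun_div_atTop :
    Tendsto (fun t => InformationTheory.klFun t / t) atTop atTop := by
  refine tendsto_atTop_mono' _ ?_ (tendsto_atTop_add_const_right _ (-1) Real.tendsto_log_atTop)
  filter_upwards [eventually_gt_atTop 0] with t ht
  rw [le_div_iff₀ ht, InformationTheory.klFun_apply]
  linarith

section Family

variable {P : Fin d → ℝ} {V : (Fin d → ℝ) → (Fin d → ℝ) → ℝ} {ι : Type*} {ε : ι → ℝ}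
  {u m : ι → (Fin d → ℝ) → ℝ} {H : ι → ℝ} {B : ℝ}

theorem exists_forall_setIntegral_gradNorm_pow_le
    (h : ∀ i, SolvesMFG P V (ε i) (u i) (m i) (H i)) (hB : ∀ x y, |V x y| ≤ B) (r : ℕ) :
    ∃ C, ∀ i, ∫ x in cube d, gradNorm (u i) x ^ r ≤ C :=
  ⟨2 ^ r * r.factorial *
      Real.exp ((∑ i, (|P i| + 1)) / 2 + (B + ((∑ i, P i ^ 2) / 2 + B))), fun i =>
    ((h i).setIntegral_gradNorm_pow_le hB r).trans
      (by gcongr; exact (h i).effectiveHamiltonian_le hB)⟩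

theorem uniformIntegrable_density (h : ∀ i, SolvesMFG P V (ε i) (u i) (m i) (H i))
    (hB : ∀ x y, |V x y| ≤ B) :
    UniformIntegrable m 1 (volume.restrict (cube d)) := by
  have habs i x : |m i x| = m i x := abs_of_pos ((h i).density_pos x)
  refine uniformIntegrable_of_superlinear (fun t => InformationTheory.klFun_nonneg)
    tendsto_klFun_div_atTop (C := (∑ i, P i ^ 2) / 2 + 2 * B)
    (fun i => (h i).continuous_density.aestronglyMeasurable) (fun i => ?_) fun i => ?_
  · exact integrable_cube_of_continuous
      (InformationTheory.continuous_klFun.comp (h i).continuous_density.abs)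
  · simp only [habs]
    linarith [(h i).setIntegral_klFun_density_le hB, (h i).neg_le_effectiveHamiltonian hB]

end Family

theorem exists_subseq_twoScaleW_of_setIntegral_eq_one {ε : ℕ → ℝ} (hε : ∀ n, ε n ≠ 0)
    (hε₀ : Tendsto ε atTop (𝓝 0)) {m : ℕ → (Fin d → ℝ) → ℝ} (hm : ∀ n, Continuous (m n))
    (hmp : ∀ n, ZPer (m n)) (hUI : UniformIntegrable m 1 (volume.restrict (cube d)))
    (hm₁ : ∀ n, ∫ x in cube d, m n x = 1) :
    ∃ φ : ℕ → ℕ, StrictMono φ ∧ ∃ M : (Fin d → ℝ) → (Fin d → ℝ) → ℝ,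
      Integrable (uncurry M) (cellMeasure d) ∧ ∫ x in cube d, ∫ y in cube d, M x y = 1 ∧
      TwoScaleW (fun n => ε (φ n)) (fun n => m (φ n)) M ∧
      WeakConvCube (fun n => m (φ n)) fun x => ∫ y in cube d, M x y := by
  obtain ⟨φ, hφ, W, -, hW, -, htwo, hweak⟩ := exists_subseq_twoScaleW (ι := Unit) hε hε₀
    (fun _ => hm) (fun _ => hmp) fun _ => hUI
  refine ⟨φ, hφ, curry (W ()), hW (), ?_, htwo (), hweak ()⟩
  have hmass := hweak () (fun _ => 1) measurable_const ⟨1, fun _ => abs_one.le⟩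
  simp only [mul_one, hm₁] at hmass
  exact tendsto_nhds_unique hmass tendsto_const_nhds

theorem integrableOn_cube_prod_cube_iff {f : (Fin d → ℝ) × (Fin d → ℝ) → ℝ} :
    IntegrableOn f (cube d ×ˢ cube d) ↔ Integrable f (cellMeasure d) := by
  rw [IntegrableOn, Measure.volume_eq_prod, ← Measure.prod_restrict]

end MeanFieldGame

theorem stmt5_general {d : ℕ} (P : Fin d → ℝ) (V : (Fin d → ℝ) → (Fin d → ℝ) → ℝ)
    (hV : ∃ B, ∀ x y, |V x y| ≤ B) (q : ℝ) (hq : 0 < q)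
    (ε : ℕ → ℝ) (hε : ∀ n, ε n ≠ 0) (hε₀ : Tendsto ε atTop (𝓝 0))
    (u m : ℕ → (Fin d → ℝ) → ℝ) (H : ℕ → ℝ)
    (hsol : ∀ n, SolvesMFG P V (ε n) (u n) (m n) (H n)) (α : ℝ) (hα : α ∈ Set.Ioo (0 : ℝ) 1) :
    ∃ u₀ : (Fin d → ℝ) → ℝ, ∃ g₀ : (Fin d → ℝ) → Fin d → ℝ,
    ∃ u₁ : (Fin d → ℝ) → (Fin d → ℝ) → ℝ, ∃ g₁ : (Fin d → ℝ) → (Fin d → ℝ) → Fin d → ℝ,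
    ∃ M : (Fin d → ℝ) → (Fin d → ℝ) → ℝ, ∃ Hbar : ℝ, ∃ φ : ℕ → ℕ, StrictMono φ ∧
      (HolderCont α u₀ ∧ ZPer u₀ ∧ (∫ x in cube d, u₀ x) = 0 ∧
        (∀ i, WeakPDer i u₀ fun x => g₀ x i) ∧
        (∀ i, IntegrableOn (fun x => |g₀ x i| ^ q) (cube d))) ∧
      ((∀ᵐ x ∂(volume.restrict (cube d)), ZPer (u₁ x) ∧ (∀ i, ZPer fun y => g₁ x y i) ∧
          ∀ i, WeakPDer i (u₁ x) fun y => g₁ x y i) ∧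
        IntegrableOn (fun z : (Fin d → ℝ) × (Fin d → ℝ) =>
          |u₁ z.1 z.2| ^ q + ∑ i, |g₁ z.1 z.2 i| ^ q) (cube d ×ˢ cube d)) ∧
      (IntegrableOn (uncurry M) (cube d ×ˢ cube d) ∧
        (∫ x in cube d, ∫ y in cube d, M x y) = 1) ∧
      Tendsto (fun k => ⨆ x, |u (φ k) x - u₀ x|) atTop (𝓝 0) ∧
      (WeakConvCube (fun k => u (φ k)) u₀ ∧
        ∀ i, WeakConvCube (fun k x => pder i (u (φ k)) x) fun x => g₀ x i) ∧
      (∀ i, TwoScaleW (fun k => ε (φ k)) (fun k x => pder i (u (φ k)) x)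
        fun x y => g₀ x i + g₁ x y i) ∧
      TwoScaleW (fun k => ε (φ k)) (fun k => m (φ k)) M ∧
      WeakConvCube (fun k => m (φ k)) (fun x => ∫ y in cube d, M x y) ∧
      Tendsto (fun k => H (φ k)) atTop (𝓝 Hbar) := by
  obtain ⟨B, hB⟩ := hV
  have hgrad := exists_forall_setIntegral_gradNorm_pow_le hsol hB
  obtain ⟨Hbar, -, φ₁, hφ₁, hHbar⟩ := isCompact_Icc.tendsto_subseq fun n =>
    ⟨(hsol n).neg_le_effectiveHamiltonian hB, (hsol n).effectiveHamiltonian_le hB⟩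
  obtain ⟨φ₂, hφ₂, M, hM, hM₁, hmtwo, hmweak⟩ := exists_subseq_twoScaleW_of_setIntegral_eq_one
    (fun n => hε (φ₁ n)) (hε₀.comp hφ₁.tendsto_atTop) (fun n => (hsol _).continuous_density)
    (fun n => (hsol _).zPer_density) (uniformIntegrable_density (fun n => hsol (φ₁ n)) hB)
    fun n => (hsol _).setIntegral_density
  have hφ₁₂ := hφ₁.comp hφ₂
  obtain ⟨φ₃, hφ₃, u₀, hu₀, hu₀p, hmean, hunif, huweak⟩ :=
    exists_subseq_tendstoUniformly_of_gradNorm (fun n => (hsol (φ₁ (φ₂ n))).contDiff)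
      (fun n => (hsol _).zPer) (fun n => (hsol _).setIntegral_eq_zero) hα
      fun r => (hgrad r).imp fun C hC n => hC _
  have hφ₁₂₃ := hφ₁₂.comp hφ₃
  obtain ⟨φ₄, hφ₄, g₀, u₁, g₁, hu₁p, hg₁p, hu₁, hmem, hgweak, hgtwo⟩ :=
    exists_subseq_twoScaleW_pder (fun n => hε _) (hε₀.comp hφ₁₂₃.tendsto_atTop)
      (fun n => (hsol (φ₁ (φ₂ (φ₃ n)))).contDiff) (fun n => (hsol _).zPer)
      fun r => (hgrad r).imp fun C hC n => hC _
  obtain ⟨hg₀q, hu₁q, hg₁q⟩ := hmem _ (ENNReal.ofReal_ne_top (r := q))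
  have hu₀weak := WeakConv.comp_strictMono huweak hφ₄
  refine ⟨u₀, g₀, u₁, g₁, M, Hbar, _, hφ₁₂₃.comp hφ₄, ⟨hu₀, hu₀p, hmean, fun i =>
    weakPDer_of_weakConvCube (fun n => (hsol _).contDiff) (fun n => (hsol _).zPer) hu₀weak
      (hgweak i), fun i => integrable_abs_rpow_of_memLp hq (hg₀q i)⟩,
    ⟨hu₁.mono fun x hx => ⟨hu₁p x, hg₁p x, hx⟩, ?_⟩, ⟨integrableOn_cube_prod_cube_iff.mpr hM, hM₁⟩,
    (tendsto_iSup_abs_sub hunif).comp hφ₄.tendsto_atTop, ⟨hu₀weak, hgweak⟩, hgtwo,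
    hmtwo.comp_strictMono (hφ₃.comp hφ₄), WeakConv.comp_strictMono hmweak (hφ₃.comp hφ₄),
    hHbar.comp (hφ₂.comp (hφ₃.comp hφ₄)).tendsto_atTop⟩
  exact integrableOn_cube_prod_cube_iff.mpr <| (integrable_abs_rpow_of_memLp hq hu₁q).add <|
    integrable_finsetSum _ fun i _ => integrable_abs_rpow_of_memLp hq (hg₁q i)

/-- compactness of the solutions `(u_ε, m_ε, H̄_ε)` of the oscillating MFG
system: along a subsequence, `u_ε → u_0` in `L^∞` and weakly in `W^{1,q}(𝕋^d)`,
`∇u_ε` weakly two-scale converges to `∇u_0 + ∇_y u_1`, `m_ε` weakly two-scale converges to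
`m` (and weakly in `L^1` to `m_0 = ∫_𝒴 m dy`), and `H̄_ε(P) → H̄(P)`, where
`u_0 ∈ C^{0,α} ∩ W^{1,q}(𝕋^d)` has zero mean (with weak gradient `g₀`),
`u_1 ∈ L^q(𝕋^d; W^{1,q}_#(𝒴^d)/ℝ)` (with `y`-weak gradient `g₁`), and `∫∫ m = 1`. -/
theorem stmt5 {d : ℕ} (P : Fin d → ℝ) (V : (Fin d → ℝ) → (Fin d → ℝ) → ℝ)
    (hV : SmoothV V) (q : ℝ) (hq : 1 ≤ q)
    (ε : ℕ → ℝ) (hεpos : ∀ n, 0 < ε n) (hε0 : Tendsto ε atTop (𝓝 0))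
    (u m : ℕ → (Fin d → ℝ) → ℝ) (H : ℕ → ℝ)
    (hsol : ∀ n, SolvesMFG P V (ε n) (u n) (m n) (H n)) :
    ∃ α ∈ Set.Ioo (0:ℝ) 1,
    ∃ u₀ : (Fin d → ℝ) → ℝ, ∃ g₀ : (Fin d → ℝ) → Fin d → ℝ,
    ∃ u₁ : (Fin d → ℝ) → (Fin d → ℝ) → ℝ, ∃ g₁ : (Fin d → ℝ) → (Fin d → ℝ) → Fin d → ℝ,
    ∃ M : (Fin d → ℝ) → (Fin d → ℝ) → ℝ, ∃ Hbar : ℝ, ∃ φ : ℕ → ℕ, StrictMono φ ∧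
      -- u₀ ∈ C^{0,α}(𝕋^d) ∩ W^{1,q}(𝕋^d), with zero mean and weak gradient g₀ ∈ L^q
      (HolderCont α u₀ ∧ ZPer u₀ ∧ (∫ x in cube d, u₀ x) = 0 ∧
        (∀ i, WeakPDer i u₀ fun x => g₀ x i) ∧
        (∀ i, IntegrableOn (fun x => |g₀ x i| ^ q) (cube d))) ∧
      -- u₁ ∈ L^q(𝕋^d; W^{1,q}_#(𝒴^d)/ℝ), with y-weak gradient g₁
      ((∀ᵐ x ∂(volume.restrict (cube d)), ZPer (u₁ x) ∧ (∀ i, ZPer fun y => g₁ x y i) ∧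
          ∀ (i : Fin d) (ψ : (Fin d → ℝ) → ℝ), ContDiff ℝ (⊤ : ℕ∞) ψ → ZPer ψ →
            (∫ y in cube d, u₁ x y * pder i ψ y) = - ∫ y in cube d, g₁ x y i * ψ y) ∧
        IntegrableOn (fun z : (Fin d → ℝ) × (Fin d → ℝ) =>
          |u₁ z.1 z.2| ^ q + ∑ i, |g₁ z.1 z.2 i| ^ q) (cube d ×ˢ cube d)) ∧
      -- m ∈ L^1(𝕋^d × 𝒴^d) with ∫∫ m = 1
      (IntegrableOn (uncurry M) (cube d ×ˢ cube d) ∧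
        (∫ x in cube d, ∫ y in cube d, M x y) = 1) ∧
      -- u_ε → u₀ in L^∞(𝕋^d)
      Tendsto (fun k => ⨆ x, |u (φ k) x - u₀ x|) atTop (𝓝 0) ∧
      -- u_ε ⇀ u₀ weakly in W^{1,q}(𝕋^d)
      (WeakConvCube (fun k => u (φ k)) u₀ ∧
        ∀ i, WeakConvCube (fun k x => pder i (u (φ k)) x) fun x => g₀ x i) ∧
      -- ∇u_ε two-scale converges to ∇u₀ + ∇_y u₁
      (∀ i, TwoScaleW (fun k => ε (φ k)) (fun k x => pder i (u (φ k)) x)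
        fun x y => g₀ x i + g₁ x y i) ∧
      -- m_ε two-scale converges to m, and weakly in L^1 to m₀ = ∫_𝒴 m dy
      TwoScaleW (fun k => ε (φ k)) (fun k => m (φ k)) M ∧
      WeakConvCube (fun k => m (φ k)) (fun x => ∫ y in cube d, M x y) ∧
      -- H̄_ε(P) → H̄(P)
      Tendsto (fun k => H (φ k)) atTop (𝓝 Hbar) := by
  have hhalf : (1 / 2 : ℝ) ∈ Set.Ioo 0 1 := ⟨by norm_num, by norm_num⟩
  exact ⟨1 / 2, hhalf, stmt5_general P V (TestFn.exists_abs_le hV) q (one_pos.trans_le hq) ε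
    (fun n => (hεpos n).ne') hε0 u m H hsol _ hhalf⟩
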